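/- arXiv:2510.11708 — 9 statements merged into one kernel-verified Lean document; each statement's English description precedes it below -/
import Mathlib

section
/- Let K be a real n×p matrix and H a real k×p matrix of full row rank k whose rows all lie in the row space of K. Set B := K (KᵀK)⁺ Hᵀ, where ⁺ denotes the Moore–Penrose pseudoinverse, so that BᵀK = H. Then the k×k matrix BᵀB is invertible, and for every μ ∈ ℝ^k and y ∈ ℝ^n one has inf_{x : Hx = μ} ‖Kx − y‖² = inf_{x ∈ ℝ^p} ‖Kx − y‖² + (μ − Bᵀy)ᵀ (BᵀB)⁻¹ (μ − Bᵀy). -/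
/-!
Write `G = KᵀK` and `P = G⁺`. Cancelling `Kᵀ` in `G * Pᵀ * G = G` gives `K * Pᵀ * G = K`
(`mul_transpose_mul_gram`). Since `H = C * K`, this yields `Bᵀ * K = H`; hence
`k = rank H ≤ rank B = rank (BᵀB)` and `BᵀB` is invertible. Transposed, the same identity says
that `x₀ = P Kᵀ y` solves the normal equations, i.e. `Kᵀ (K x₀ - y) = 0`.

With `w = μ - Bᵀ y`, the constrained minimiser is `x₁ = x₀ + P Hᵀ (BᵀB)⁻¹ w`, for which
`K x₁ = K x₀ + B (BᵀB)⁻¹ w`. If `H x = μ`, then `Bᵀ K (x - x₁) = H (x - x₁) = 0`, so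
`K x - y` is the sum of the three pairwise orthogonal vectors `K (x - x₁)`, `B (BᵀB)⁻¹ w` and
`K x₀ - y`. The middle one has squared norm `wᵀ (BᵀB)⁻¹ w`, and Pythagoras gives the formula,
both infima being attained.
-/

open Matrix

/-- Squared Euclidean norm on `Fin n → ℝ`. -/
noncomputable def sqNorm {n : ℕ} (v : Fin n → ℝ) : ℝ := ∑ i, (v i) ^ 2

/-- The four Penrose conditions, uniquely characterizing the Moore–Penrose
pseudoinverse `P` of `M`. -/
def IsMoorePenrose {a b : Type*} [Fintype a] [Fintype b]
    (M : Matrix a b ℝ) (P : Matrix b a ℝ) : Prop :=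
  M * P * M = M ∧ P * M * P = P ∧ (M * P)ᵀ = M * P ∧ (P * M)ᵀ = P * M

lemma sqNorm_eq_dotProduct {n : ℕ} (v : Fin n → ℝ) : sqNorm v = v ⬝ᵥ v := by
  simp [sqNorm, dotProduct, sq]

lemma sqNorm_nonneg {n : ℕ} (v : Fin n → ℝ) : 0 ≤ sqNorm v :=
  Finset.sum_nonneg fun _ _ => sq_nonneg _

lemma sqNorm_add {n : ℕ} {u v : Fin n → ℝ} (h : u ⬝ᵥ v = 0) :
    sqNorm (u + v) = sqNorm u + sqNorm v := by
  have h' : v ⬝ᵥ u = 0 := by rw [dotProduct_comm, h]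
  simp [sqNorm_eq_dotProduct, h, h']

/-- The range of `M` is orthogonal to the kernel of `Mᵀ`. -/
lemma mulVec_dotProduct_eq_zero {n m : ℕ} (M : Matrix (Fin n) (Fin m) ℝ) (a : Fin m → ℝ)
    {v : Fin n → ℝ} (h : Mᵀ *ᵥ v = 0) : (M *ᵥ a) ⬝ᵥ v = 0 := by
  rw [dotProduct_comm, dotProduct_mulVec, ← mulVec_transpose, h, zero_dotProduct]

/-- Only `G * P * G = G` is used, for `G = KᵀK`: its transpose is `G * Pᵀ * G = G`, and `Kᵀ` can be
cancelled because `KᵀK X = 0` forces `K X = 0`. -/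
lemma mul_transpose_mul_gram {n p : ℕ} {K : Matrix (Fin n) (Fin p) ℝ}
    {P : Matrix (Fin p) (Fin p) ℝ} (h : Kᵀ * K * P * (Kᵀ * K) = Kᵀ * K) :
    K * Pᵀ * (Kᵀ * K) = K := by
  have h1 : Kᵀ * K * (Pᵀ * (Kᵀ * K) - 1) = 0 := by
    have := congrArg transpose h
    simp only [transpose_mul, transpose_transpose] at this
    rw [mul_sub, mul_one, sub_eq_zero, this]
  have h2 : K * (Pᵀ * (Kᵀ * K) - 1) = 0 := by
    rw [← conjTranspose_eq_transpose_of_trivial K] at h1 ⊢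
    exact (conjTranspose_mul_self_mul_eq_zero K _).1 h1
  rw [Matrix.mul_sub, Matrix.mul_one, sub_eq_zero] at h2
  rw [Matrix.mul_assoc, h2]

/-- with `B = K (KᵀK)⁺ Hᵀ`, one has `BᵀK = H`, `BᵀB` invertible, and
`inf_{Hx = μ} ‖Kx − y‖² = inf_x ‖Kx − y‖² + (μ − Bᵀy)ᵀ(BᵀB)⁻¹(μ − Bᵀy)`. -/
theorem stmt1 {n p k : ℕ} (K : Matrix (Fin n) (Fin p) ℝ) (H : Matrix (Fin k) (Fin p) ℝ)
    (hH : H.rank = k) (hrow : ∃ C : Matrix (Fin k) (Fin n) ℝ, H = C * K)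
    (KtKpinv : Matrix (Fin p) (Fin p) ℝ) (hpinv : IsMoorePenrose (Kᵀ * K) KtKpinv)
    (B : Matrix (Fin n) (Fin k) ℝ) (hB : B = K * KtKpinv * Hᵀ) :
    Bᵀ * K = H ∧ IsUnit (Bᵀ * B) ∧
    ∀ (μ : Fin k → ℝ) (y : Fin n → ℝ),
      sInf {t : ℝ | ∃ x : Fin p → ℝ, H.mulVec x = μ ∧ t = sqNorm (K.mulVec x - y)}
        = sInf {t : ℝ | ∃ x : Fin p → ℝ, t = sqNorm (K.mulVec x - y)}
          + (μ - Bᵀ.mulVec y) ⬝ᵥ (Bᵀ * B)⁻¹.mulVec (μ - Bᵀ.mulVec y) := by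
  obtain ⟨C, hC⟩ := hrow
  have hK := mul_transpose_mul_gram hpinv.1
  have hBK : Bᵀ * K = H := by
    rw [hB, transpose_mul, transpose_mul, transpose_transpose, hC]
    calc C * K * (KtKpinvᵀ * Kᵀ) * K = C * (K * KtKpinvᵀ * (Kᵀ * K)) := by
          simp only [Matrix.mul_assoc]
      _ = C * K := by rw [hK]
  have hU : IsUnit (Bᵀ * B) := by
    have h1 : k ≤ B.rank := by
      have := rank_mul_le_left Bᵀ K
      rwa [hBK, hH, rank_transpose] at this
    have h2 : (Bᵀ * B).rank = Fintype.card (Fin k) := by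
      rw [rank_transpose_mul_self, Fintype.card_fin]
      exact le_antisymm (by simpa using rank_le_width B) h1
    have h3 : LinearMap.range (Bᵀ * B).mulVecLin = ⊤ :=
      Submodule.eq_top_of_finrank_eq (by rw [Module.finrank_fintype_fun_eq_card]; exact h2)
    exact mulVec_surjective_iff_isUnit.1 (LinearMap.range_eq_top.1 h3)
  refine ⟨hBK, hU, fun μ y => ?_⟩
  have hdet : IsUnit (Bᵀ * B).det := (isUnit_iff_isUnit_det _).1 hU
  set S := (Bᵀ * B)⁻¹ with hS
  set w := μ - Bᵀ *ᵥ y with hw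
  set x₀ := KtKpinv *ᵥ (Kᵀ *ᵥ y) with hx₀
  have hBR : K * (KtKpinv * Hᵀ) = B := by rw [hB, Matrix.mul_assoc]
  -- the normal equations for the unconstrained problem
  have hr : Kᵀ *ᵥ (K *ᵥ x₀ - y) = 0 := by
    have h := congrArg transpose hK
    simp only [transpose_mul, transpose_transpose] at h
    rw [mulVec_sub, hx₀, mulVec_mulVec, mulVec_mulVec, mulVec_mulVec, Matrix.mul_assoc (Kᵀ * K), h,
      sub_self]
  have hBr : Bᵀ *ᵥ (K *ᵥ x₀ - y) = 0 := by
    rw [← hBR, transpose_mul, ← mulVec_mulVec, hr, mulVec_zero]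
  have hHx₀ : H *ᵥ x₀ = Bᵀ *ᵥ y := by
    rw [mulVec_sub, mulVec_mulVec, hBK] at hBr
    exact sub_eq_zero.1 hBr
  have hBSw : Bᵀ *ᵥ (B *ᵥ (S *ᵥ w)) = w := by
    rw [mulVec_mulVec, mulVec_mulVec, hS, mul_nonsing_inv _ hdet, one_mulVec]
  have hnorm : sqNorm (B *ᵥ (S *ᵥ w)) = w ⬝ᵥ S *ᵥ w := by
    rw [sqNorm_eq_dotProduct, dotProduct_mulVec, ← mulVec_transpose, hBSw]
  set x₁ := x₀ + (KtKpinv * Hᵀ) *ᵥ (S *ᵥ w) with hx₁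
  have hKx₁ : K *ᵥ x₁ = K *ᵥ x₀ + B *ᵥ (S *ᵥ w) := by
    rw [hx₁, mulVec_add, mulVec_mulVec (S *ᵥ w), hBR]
  have hHx₁ : H *ᵥ x₁ = μ := by
    rw [← hBK, ← mulVec_mulVec, hKx₁, mulVec_add, hBSw, mulVec_mulVec, hBK, hHx₀, hw]
    abel
  have hval : sqNorm (K *ᵥ x₁ - y) = sqNorm (K *ᵥ x₀ - y) + w ⬝ᵥ S *ᵥ w := by
    rw [hKx₁, show K *ᵥ x₀ + B *ᵥ (S *ᵥ w) - y = B *ᵥ (S *ᵥ w) + (K *ᵥ x₀ - y) by abel,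
      sqNorm_add (mulVec_dotProduct_eq_zero B _ hBr), hnorm, add_comm]
  have hfree : IsLeast {t : ℝ | ∃ x : Fin p → ℝ, t = sqNorm (K *ᵥ x - y)}
      (sqNorm (K *ᵥ x₀ - y)) := by
    refine ⟨⟨x₀, rfl⟩, ?_⟩
    rintro _ ⟨x, rfl⟩
    rw [show K *ᵥ x - y = K *ᵥ (x - x₀) + (K *ᵥ x₀ - y) by rw [mulVec_sub]; abel,
      sqNorm_add (mulVec_dotProduct_eq_zero K _ hr)]
    exact le_add_of_nonneg_left (sqNorm_nonneg _)
  have hcons : IsLeast {t : ℝ | ∃ x : Fin p → ℝ, H *ᵥ x = μ ∧ t = sqNorm (K *ᵥ x - y)}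
      (sqNorm (K *ᵥ x₁ - y)) := by
    refine ⟨⟨x₁, hHx₁, rfl⟩, ?_⟩
    rintro _ ⟨x, hx, rfl⟩
    have hd : Bᵀ *ᵥ (K *ᵥ (x - x₁)) = 0 := by
      rw [mulVec_mulVec, hBK, mulVec_sub, hx, hHx₁, sub_self]
    -- `K x₁ - y` splits along the range of `B` and the kernel of `Kᵀ`
    have horth : (K *ᵥ (x - x₁)) ⬝ᵥ (K *ᵥ x₁ - y) = 0 := by
      rw [hKx₁, show K *ᵥ x₀ + B *ᵥ (S *ᵥ w) - y = B *ᵥ (S *ᵥ w) + (K *ᵥ x₀ - y) by abel,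
        dotProduct_add, mulVec_dotProduct_eq_zero K _ hr, dotProduct_comm,
        mulVec_dotProduct_eq_zero B _ hd, add_zero]
    rw [show K *ᵥ x - y = K *ᵥ (x - x₁) + (K *ᵥ x₁ - y) by rw [mulVec_sub]; abel,
      sqNorm_add horth]
    exact le_add_of_nonneg_left (sqNorm_nonneg _)
  rw [hcons.csInf_eq, hfree.csInf_eq, hval]
end

section
/- Let K be a real n×p matrix and H a real k×p matrix of full row rank k whose rows all lie in the row space of K, and set B := K (KᵀK)⁺ Hᵀ (so BᵀK = H and BᵀB is invertible). For every y ∈ ℝ^n and real constant c, the image set {Hx : x ∈ ℝ^p, ‖Kx − y‖² ≤ c} equals the ellipsoid {μ ∈ ℝ^k : (μ − Bᵀy)ᵀ (BᵀB)⁻¹ (μ − Bᵀy) ≤ c − inf_{x' ∈ ℝ^p} ‖Kx' − y‖²}. -/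
/-!
Put `S = KᵀK`, `P = S⁺` and `W = P Hᵀ`, so `B = K W`. Transposing `S P S = S` and cancelling `Kᵀ`
on the left (`mul_gInv_mul_gram`) gives `K Pᵀ S = K`. As the rows of `H` lie in the row space of
`K`, this yields `Kᵀ B = Hᵀ`; it also gives the normal equation `Kᵀ (K x₀) = Kᵀ y` for
`x₀ = P Kᵀ y`. Hence
`‖K x - y‖² = ‖K (x - x₀)‖² + ‖K x₀ - y‖²`, so the infimum is attained at `x₀`, and
`H x₀ = Bᵀ y`.

It remains to see that, for `G = BᵀB` and `δ = μ - Bᵀ y`, the least value of `‖K d‖²` over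
`H d = δ` is `δᵀ G⁻¹ δ`. As `H d = Bᵀ (K d)`, the lower bound is `‖v‖² ≥ (Bᵀ v)ᵀ G⁻¹ (Bᵀ v)`
(the right side is the squared length of the projection of `v` on the column space of `B`), and
`d = W G⁻¹ δ` attains it. The matrix `G` is invertible because `B u = 0` implies
`Hᵀ u = Kᵀ B u = 0`, hence `u = 0` by the full row rank of `H`.
-/

open Matrix

/-- Pythagoras. -/
lemma sqNorm_add_of_dotProduct_eq_zero {n : ℕ} {v w : Fin n → ℝ} (h : v ⬝ᵥ w = 0) :
    sqNorm (v + w) = sqNorm v + sqNorm w := by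
  have h' : w ⬝ᵥ v = 0 := by rw [dotProduct_comm, h]
  simp only [sqNorm_eq_dotProduct, add_dotProduct, dotProduct_add, h, h']
  ring

/-- Left cancellation of `Kᵀ`: `KᵀK X = 0` forces `K X = 0`, here for `X = P KᵀK - 1`. -/
lemma mul_gInv_mul_gram {n p : ℕ} {K : Matrix (Fin n) (Fin p) ℝ} {P : Matrix (Fin p) (Fin p) ℝ}
    (h : Kᵀ * K * P * (Kᵀ * K) = Kᵀ * K) : K * P * (Kᵀ * K) = K := by
  have h1 : Kᴴ * K * (P * (Kᵀ * K) - 1) = 0 := by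
    rw [conjTranspose_eq_transpose_of_trivial, Matrix.mul_sub, ← Matrix.mul_assoc, h,
      Matrix.mul_one, sub_self]
  rw [conjTranspose_mul_self_mul_eq_zero, Matrix.mul_sub, Matrix.mul_one, sub_eq_zero] at h1
  rw [Matrix.mul_assoc, h1]

lemma transpose_mulVec_injective_of_rank {k p : ℕ} {H : Matrix (Fin k) (Fin p) ℝ}
    (hH : H.rank = k) {u : Fin k → ℝ} (hu : Hᵀ *ᵥ u = 0) : u = 0 := by
  have hli : LinearIndependent ℝ H.row := by
    rw [linearIndependent_iff_card_eq_finrank_span, Set.finrank, ← rank_eq_finrank_span_row]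
    simp [hH]
  have hinj := vecMul_injective_iff.2 hli
  apply hinj
  simpa [mulVec_transpose] using hu

lemma isUnit_det_gram {n k : ℕ} {B : Matrix (Fin n) (Fin k) ℝ}
    (hB : ∀ u, B *ᵥ u = 0 → u = 0) : IsUnit (Bᵀ * B).det := by
  rw [← isUnit_iff_isUnit_det, ← mulVec_injective_iff_isUnit]
  refine (injective_iff_map_eq_zero (Bᵀ * B).mulVecLin).2 fun u hu => hB u ?_
  have h : (Bᴴ * B) *ᵥ u = 0 := by
    rw [conjTranspose_eq_transpose_of_trivial]
    exact hu
  exact (conjTranspose_mul_self_mulVec_eq_zero B u).1 h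

/-- `δᵀ (BᵀB)⁻¹ δ` is the squared length of the least-norm solution of `Bᵀ v = δ`. -/
lemma sqNorm_mulVec_gram_inv {n k : ℕ} {B : Matrix (Fin n) (Fin k) ℝ}
    (hG : IsUnit (Bᵀ * B).det) (δ : Fin k → ℝ) :
    sqNorm (B *ᵥ ((Bᵀ * B)⁻¹ *ᵥ δ)) = δ ⬝ᵥ (Bᵀ * B)⁻¹ *ᵥ δ := by
  rw [sqNorm_eq_dotProduct, dotProduct_mulVec, ← mulVec_transpose, mulVec_mulVec, mulVec_mulVec,
    mul_nonsing_inv _ hG, one_mulVec]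

lemma gram_inv_le_sqNorm {n k : ℕ} {B : Matrix (Fin n) (Fin k) ℝ}
    (hG : IsUnit (Bᵀ * B).det) (v : Fin n → ℝ) :
    (Bᵀ *ᵥ v) ⬝ᵥ (Bᵀ * B)⁻¹ *ᵥ (Bᵀ *ᵥ v) ≤ sqNorm v := by
  rw [← sqNorm_mulVec_gram_inv hG]
  set w := (Bᵀ * B)⁻¹ *ᵥ (Bᵀ *ᵥ v) with hw
  have hperp : (v - B *ᵥ w) ⬝ᵥ (B *ᵥ w) = 0 := by
    have h0 : Bᵀ *ᵥ (v - B *ᵥ w) = 0 := by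
      rw [mulVec_sub, mulVec_mulVec, hw, mulVec_mulVec _ (Bᵀ * B),
        mul_nonsing_inv _ hG, one_mulVec, sub_self]
    rw [dotProduct_mulVec, ← mulVec_transpose, h0, zero_dotProduct]
  have h := sqNorm_add_of_dotProduct_eq_zero hperp
  rw [sub_add_cancel] at h
  linarith [sqNorm_nonneg (v - B *ᵥ w)]

/-- with `B = K (KᵀK)⁺ Hᵀ`, the image set `{Hx : ‖Kx − y‖² ≤ c}` equals the
ellipsoid `{μ : (μ − Bᵀy)ᵀ(BᵀB)⁻¹(μ − Bᵀy) ≤ c − inf_{x'} ‖Kx' − y‖²}`. -/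
theorem stmt2 {n p k : ℕ} (K : Matrix (Fin n) (Fin p) ℝ) (H : Matrix (Fin k) (Fin p) ℝ)
    (hH : H.rank = k) (hrow : ∃ C : Matrix (Fin k) (Fin n) ℝ, H = C * K)
    (KtKpinv : Matrix (Fin p) (Fin p) ℝ) (hpinv : IsMoorePenrose (Kᵀ * K) KtKpinv)
    (B : Matrix (Fin n) (Fin k) ℝ) (hB : B = K * KtKpinv * Hᵀ)
    (y : Fin n → ℝ) (c : ℝ) :
    {μ : Fin k → ℝ | ∃ x : Fin p → ℝ, H.mulVec x = μ ∧ sqNorm (K.mulVec x - y) ≤ c}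
      = {μ : Fin k → ℝ |
          (μ - Bᵀ.mulVec y) ⬝ᵥ (Bᵀ * B)⁻¹.mulVec (μ - Bᵀ.mulVec y)
            ≤ c - sInf {t : ℝ | ∃ x' : Fin p → ℝ, t = sqNorm (K.mulVec x' - y)}} := by
  obtain ⟨C, hC⟩ := hrow
  have hS := hpinv.1
  have hKPt : K * KtKpinvᵀ * (Kᵀ * K) = K := by
    apply mul_gInv_mul_gram
    have h := congrArg transpose hS
    simpa [transpose_mul, Matrix.mul_assoc] using h
  have hKPt' : Kᵀ * K * KtKpinv * Kᵀ = Kᵀ := by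
    have h := congrArg transpose hKPt
    simpa [transpose_mul, Matrix.mul_assoc] using h
  have hKB : Kᵀ * B = Hᵀ := by
    rw [hB, hC, transpose_mul]
    simp only [← Matrix.mul_assoc]
    rw [hKPt']
  have hBK : Bᵀ * K = H := by
    have h := congrArg transpose hKB
    simpa [transpose_mul] using h
  have hG : IsUnit (Bᵀ * B).det := isUnit_det_gram fun u hu =>
    transpose_mulVec_injective_of_rank hH (by rw [← hKB, ← mulVec_mulVec, hu, mulVec_zero])
  obtain ⟨W, hW⟩ : ∃ W, B = K * W := ⟨KtKpinv * Hᵀ, by rw [hB, Matrix.mul_assoc]⟩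
  -- the least-squares solution
  obtain ⟨x₀, hx₀⟩ : ∃ x₀, Kᵀ *ᵥ (K *ᵥ x₀) = Kᵀ *ᵥ y :=
    ⟨(KtKpinv * Kᵀ) *ᵥ y, by
      rw [mulVec_mulVec, mulVec_mulVec, ← Matrix.mul_assoc, hKPt']⟩
  have hHx₀ : H *ᵥ x₀ = Bᵀ *ᵥ y := by
    rw [← hBK, hW, transpose_mul, ← mulVec_mulVec, ← mulVec_mulVec, ← mulVec_mulVec, hx₀]
  have hpyth : ∀ d, sqNorm (K *ᵥ (x₀ + d) - y) = sqNorm (K *ᵥ d) + sqNorm (K *ᵥ x₀ - y) := by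
    intro d
    have h0 : (K *ᵥ d) ⬝ᵥ (K *ᵥ x₀ - y) = 0 := by
      rw [dotProduct_comm, dotProduct_mulVec, ← mulVec_transpose, mulVec_sub, hx₀, sub_self,
        zero_dotProduct]
    rw [← sqNorm_add_of_dotProduct_eq_zero h0, mulVec_add]
    congr 1
    abel
  have hinf : sInf {t : ℝ | ∃ x' : Fin p → ℝ, t = sqNorm (K *ᵥ x' - y)}
      = sqNorm (K *ᵥ x₀ - y) := by
    refine IsLeast.csInf_eq ⟨⟨x₀, rfl⟩, ?_⟩
    rintro _ ⟨x, rfl⟩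
    have h := hpyth (x - x₀)
    rw [add_sub_cancel] at h
    linarith [sqNorm_nonneg (K *ᵥ (x - x₀))]
  ext μ
  simp only [Set.mem_ofPred_eq, hinf]
  constructor
  · rintro ⟨x, rfl, hx⟩
    have h := hpyth (x - x₀)
    rw [add_sub_cancel] at h
    have hδ : H *ᵥ x - Bᵀ *ᵥ y = Bᵀ *ᵥ (K *ᵥ (x - x₀)) := by
      rw [mulVec_mulVec, hBK, mulVec_sub, hHx₀]
    rw [hδ]
    linarith [gram_inv_le_sqNorm hG (K *ᵥ (x - x₀))]
  · intro hμ
    have hKd : K *ᵥ (W *ᵥ ((Bᵀ * B)⁻¹ *ᵥ (μ - Bᵀ *ᵥ y)))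
        = B *ᵥ ((Bᵀ * B)⁻¹ *ᵥ (μ - Bᵀ *ᵥ y)) := by
      rw [mulVec_mulVec, ← hW]
    refine ⟨x₀ + W *ᵥ ((Bᵀ * B)⁻¹ *ᵥ (μ - Bᵀ *ᵥ y)), ?_, ?_⟩
    · rw [mulVec_add, hHx₀]
      nth_rewrite 1 [← hBK]
      rw [← mulVec_mulVec, hKd, mulVec_mulVec, mulVec_mulVec, mul_nonsing_inv _ hG, one_mulVec,
        add_sub_cancel]
    · rw [hpyth, hKd, sqNorm_mulVec_gram_inv hG]
      linarith
end

section
/- Let K be a real n×p matrix and H a real k×p matrix of full row rank k whose rows all lie in the row space of K, and set B := K (KᵀK)⁺ Hᵀ. Let γₙ be the standard Gaussian measure on ℝⁿ. Then, as random variables on the probability space (ℝⁿ, γₙ), the functions ε ↦ ‖(I − K K⁺) ε‖² and ε ↦ Bᵀε are independent (hence so are ε ↦ ‖(I − K K⁺) ε‖² and any measurable function of Bᵀε). -/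
/-!
Linear images of a Gaussian vector are jointly Gaussian, and jointly Gaussian vectors are
independent as soon as their cross-covariance vanishes. For a standard Gaussian `ε`, the
cross-covariance matrix of `A ε` and `C ε` is `A Cᵀ`
(`covariance_mulVec_stdGaussian`), so `A Cᵀ = 0` makes `A ε` and `C ε` independent
(`indepFun_mulVec_stdGaussian`). Here `A = I - K K⁺` and `C = Bᵀ`; since `B` has the form `K M`
and `K K⁺ K = K`, the product `(I - K K⁺) B` is zero. Squared norms are measurable, so
independence passes from `(I - K K⁺) ε` to its squared norm.
-/

open Matrix MeasureTheory ProbabilityTheory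

/-- The standard Gaussian measure on `ℝⁿ = (Fin n → ℝ)`. -/
noncomputable def stdGaussian (n : ℕ) : Measure (Fin n → ℝ) :=
  Measure.pi fun _ => gaussianReal 0 1

lemma iIndepFun_eval_stdGaussian (n : ℕ) :
    iIndepFun (fun (i : Fin n) (ε : Fin n → ℝ) => ε i) (_root_.stdGaussian n) :=
  iIndepFun_pi (X := fun _ x => x) fun _ => aemeasurable_id

lemma hasLaw_eval_stdGaussian {n : ℕ} (i : Fin n) :
    HasLaw (fun ε : Fin n → ℝ => ε i) (gaussianReal 0 1) (_root_.stdGaussian n) :=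
  (measurePreserving_eval (fun _ : Fin n => gaussianReal 0 1) i).hasLaw

lemma hasGaussianLaw_eval_stdGaussian {n : ℕ} (i : Fin n) :
    HasGaussianLaw (fun ε : Fin n → ℝ => ε i) (_root_.stdGaussian n) :=
  (hasLaw_eval_stdGaussian i).hasGaussianLaw

lemma hasGaussianLaw_id_stdGaussian (n : ℕ) :
    HasGaussianLaw (fun ε : Fin n → ℝ => ε) (_root_.stdGaussian n) :=
  (iIndepFun_eval_stdGaussian n).hasGaussianLaw hasGaussianLaw_eval_stdGaussian

lemma covariance_eval_stdGaussian {n : ℕ} (i j : Fin n) :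
    cov[fun ε : Fin n → ℝ => ε i, fun ε => ε j; _root_.stdGaussian n] =
      (1 : Matrix (Fin n) (Fin n) ℝ) i j := by
  rcases eq_or_ne i j with rfl | hij
  · rw [covariance_self (hasGaussianLaw_eval_stdGaussian i).aemeasurable,
      (hasLaw_eval_stdGaussian i).variance_eq]
    simp
  · rw [one_apply_ne hij]
    exact ((iIndepFun_eval_stdGaussian n).indepFun hij).covariance_eq_zero
      (hasGaussianLaw_eval_stdGaussian i).memLp_two (hasGaussianLaw_eval_stdGaussian j).memLp_two

lemma covariance_mulVec_stdGaussian {n m l : ℕ} (A : Matrix (Fin m) (Fin n) ℝ)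
    (C : Matrix (Fin l) (Fin n) ℝ) (i : Fin m) (j : Fin l) :
    cov[fun ε : Fin n → ℝ => (A *ᵥ ε) i, fun ε => (C *ᵥ ε) j; _root_.stdGaussian n] =
      (A * Cᵀ) i j := by
  have : IsProbabilityMeasure (_root_.stdGaussian n) :=
    (hasGaussianLaw_id_stdGaussian n).isProbabilityMeasure
  simp only [mulVec, dotProduct]
  rw [covariance_fun_sum_fun_sum
    (fun a => (hasGaussianLaw_eval_stdGaussian a).memLp_two.const_mul _)
    (fun b => (hasGaussianLaw_eval_stdGaussian b).memLp_two.const_mul _)]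
  simp [covariance_const_mul_left, covariance_const_mul_right, covariance_eval_stdGaussian,
    one_apply, mul_apply, mul_comm]

lemma indepFun_mulVec_stdGaussian {n m l : ℕ} (A : Matrix (Fin m) (Fin n) ℝ)
    (C : Matrix (Fin l) (Fin n) ℝ) (h : A * Cᵀ = 0) :
    IndepFun (fun ε : Fin n → ℝ => A *ᵥ ε) (fun ε => C *ᵥ ε) (_root_.stdGaussian n) := by
  have hjoint : HasGaussianLaw (fun ε : Fin n → ℝ => (A *ᵥ ε, C *ᵥ ε)) (_root_.stdGaussian n) :=
    (hasGaussianLaw_id_stdGaussian n).map_fun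
      ((mulVecLin A).toContinuousLinearMap.prod (mulVecLin C).toContinuousLinearMap)
  refine HasGaussianLaw.indepFun_of_covariance_eval
    (X := fun i (ε : Fin n → ℝ) => (A *ᵥ ε) i) (Y := fun j ε => (C *ᵥ ε) j) hjoint fun i j => ?_
  rw [covariance_mulVec_stdGaussian, h, Matrix.zero_apply]

lemma measurable_sqNorm {n : ℕ} : Measurable (sqNorm : (Fin n → ℝ) → ℝ) := by
  unfold sqNorm
  fun_prop

/-- under the standard Gaussian measure, `ε ↦ ‖(I − K K⁺)ε‖²` and
`ε ↦ Bᵀε` are independent random variables (with `B = K (KᵀK)⁺ Hᵀ`). -/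
theorem stmt4 {n p k : ℕ} (K : Matrix (Fin n) (Fin p) ℝ) (H : Matrix (Fin k) (Fin p) ℝ)
    (hH : H.rank = k) (hrow : ∃ C : Matrix (Fin k) (Fin n) ℝ, H = C * K)
    (KtKpinv : Matrix (Fin p) (Fin p) ℝ) (hpinv : IsMoorePenrose (Kᵀ * K) KtKpinv)
    (Kpinv : Matrix (Fin p) (Fin n) ℝ) (hKpinv : IsMoorePenrose K Kpinv)
    (B : Matrix (Fin n) (Fin k) ℝ) (hB : B = K * KtKpinv * Hᵀ) :
    IndepFun
      (fun ε : Fin n → ℝ => sqNorm (((1 : Matrix (Fin n) (Fin n) ℝ) - K * Kpinv).mulVec ε))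
      (fun ε : Fin n → ℝ => Bᵀ.mulVec ε)
      (stdGaussian n) := by
  have hAB : (1 - K * Kpinv) * Bᵀᵀ = 0 := by
    rw [transpose_transpose, hB, Matrix.mul_assoc K, ← Matrix.mul_assoc, Matrix.sub_mul,
      hKpinv.1, Matrix.one_mul, sub_self, Matrix.zero_mul]
  exact (indepFun_mulVec_stdGaussian _ _ hAB).comp measurable_sqNorm measurable_id
end

section
/- Let K be a real n×p matrix of rank R and H a real k×p matrix of full row rank k whose rows all lie in the row space of K. Let γₙ be the standard Gaussian measure on ℝⁿ, fix x* ∈ ℝ^p, and put μ := Hx*. Then the pushforward of γₙ under the map ε ↦ inf_{x : Hx = μ} ‖Kx − (Kx* + ε)‖² equals the pushforward of γₙ under the map ε ↦ Σ_{i=1}^{n−R+k} ε_i²; that is, the unconstrained one-term statistic λ¹(μ, Kx*+ε) follows a chi-squared law with n − R + k degrees of freedom. -/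
/-!
The set `{K x - K x* : H x = H x*}` is the subspace `N = K (ker H)` of `ℝⁿ`, so the infimum is the
squared distance from `ε` to `N`, that is, the squared norm of the projection of `ε` on `Nᗮ`.
Since the rows of `H` lie in the row space of `K`, `ker K ≤ ker H`, and rank-nullity for `K`
restricted to `ker H` gives `dim N = rank K - k`, so that `dim Nᗮ = n - rank K + k`
(`finrank_tangent_orthogonal`). In an orthonormal basis of `ℝⁿ` whose first `dim Nᗮ` vectors span
`Nᗮ` the squared distance is the sum of the squares of the first `dim Nᗮ` coordinates
(`exists_orthonormalBasis_dist_sq`), and by rotation invariance of the Gaussian measure these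
coordinates are again independent standard Gaussian variables (`map_pi_gaussian_eq`).
-/

open Matrix MeasureTheory ProbabilityTheory

/-- The image of `ker H` under `K`, as a subspace of Euclidean space: the direction of the affine
subspace `{K x : H x = μ}`. -/
noncomputable def tangent {n p k : ℕ} (K : Matrix (Fin n) (Fin p) ℝ)
    (H : Matrix (Fin k) (Fin p) ℝ) : Submodule ℝ (EuclideanSpace ℝ (Fin n)) :=
  (LinearMap.ker H.mulVecLin).map
    ((WithLp.linearEquiv 2 ℝ (Fin n → ℝ)).symm.toLinearMap ∘ₗ K.mulVecLin)

lemma mem_tangent {n p k : ℕ} {K : Matrix (Fin n) (Fin p) ℝ} {H : Matrix (Fin k) (Fin p) ℝ}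
    {m : EuclideanSpace ℝ (Fin n)} :
    m ∈ tangent K H ↔ ∃ z, H.mulVec z = 0 ∧ WithLp.toLp 2 (K.mulVec z) = m := by
  simp [tangent]

lemma finrank_tangent_orthogonal {n p k : ℕ} (K : Matrix (Fin n) (Fin p) ℝ)
    (H : Matrix (Fin k) (Fin p) ℝ) (hH : H.rank = k)
    (hrow : ∃ C : Matrix (Fin k) (Fin n) ℝ, H = C * K) :
    Module.finrank ℝ (tangent K H)ᗮ = n - K.rank + k := by
  obtain ⟨C, rfl⟩ := hrow
  set L : (Fin p → ℝ) →ₗ[ℝ] EuclideanSpace ℝ (Fin n) :=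
    (WithLp.linearEquiv 2 ℝ (Fin n → ℝ)).symm.toLinearMap ∘ₗ K.mulVecLin with hL
  have hker : LinearMap.ker L = LinearMap.ker K.mulVecLin := by
    simp [hL, LinearMap.ker_comp]
  have hle : LinearMap.ker L ≤ LinearMap.ker (C * K).mulVecLin := by
    rw [hker, Matrix.mulVecLin_mul]
    exact LinearMap.ker_le_ker_comp _ _
  have h1 := (L.domRestrict (LinearMap.ker (C * K).mulVecLin)).finrank_range_add_finrank_ker
  rw [LinearMap.range_domRestrict, LinearMap.ker_domRestrict] at h1
  have h2 : Module.finrank ℝ ((LinearMap.ker L).submoduleOf (LinearMap.ker (C * K).mulVecLin))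
      = Module.finrank ℝ (LinearMap.ker K.mulVecLin) := by
    rw [(Submodule.submoduleOfEquivOfLe hle).finrank_eq, hker]
  have h2' : Module.finrank ℝ ((LinearMap.ker L).comap (LinearMap.ker (C * K).mulVecLin).subtype)
      = Module.finrank ℝ (LinearMap.ker K.mulVecLin) := h2
  have h3 := K.mulVecLin.finrank_range_add_finrank_ker
  have h4 := (C * K).mulVecLin.finrank_range_add_finrank_ker
  have h5 := (tangent K (C * K)).finrank_add_finrank_orthogonal
  have h6 : Module.finrank ℝ (tangent K (C * K))
    = Module.finrank ℝ ((LinearMap.ker (C * K).mulVecLin).map L) := rfl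
  have h7 : K.rank ≤ n := by simpa using K.rank_le_card_height
  have h8 : (C * K).rank ≤ K.rank := Matrix.rank_mul_le_right C K
  change (C * K).rank + _ = _ at h4
  change K.rank + _ = _ at h3
  simp only [Module.finrank_fintype_fun_eq_card, Fintype.card_fin, finrank_euclideanSpace] at h3 h4 h5
  omega

/-- There is an orthonormal basis whose first `dim Nᗮ` vectors form a basis of `Nᗮ`; in it the
squared distance to `N` is the sum of the squares of the first `dim Nᗮ` coordinates. -/
lemma exists_orthonormalBasis_dist_sq {n : ℕ} (N : Submodule ℝ (EuclideanSpace ℝ (Fin n))) :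
    ∃ b : OrthonormalBasis (Fin n) ℝ (EuclideanSpace ℝ (Fin n)), ∀ e,
      ‖e - N.starProjection e‖ ^ 2 =
        ∑ i : Fin n, if (i : ℕ) < Module.finrank ℝ Nᗮ then (inner ℝ (b i) e) ^ 2 else 0 := by
  set d := Module.finrank ℝ Nᗮ with hd
  have hdn : d ≤ n := by
    have := N.finrank_add_finrank_orthogonal
    simp only [finrank_euclideanSpace, Fintype.card_fin] at this
    omega
  let c : OrthonormalBasis (Fin d) ℝ Nᗮ := stdOrthonormalBasis ℝ Nᗮ
  let v : Fin n → EuclideanSpace ℝ (Fin n) := fun i =>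
    if h : (i : ℕ) < d then (c ⟨i, h⟩ : EuclideanSpace ℝ (Fin n)) else 0
  let s : Set (Fin n) := {i | (i : ℕ) < d}
  have hc : Orthonormal ℝ (fun j => (c j : EuclideanSpace ℝ (Fin n))) :=
    c.orthonormal.comp_linearIsometry Nᗮ.subtypeₗᵢ
  have hv : Orthonormal ℝ (s.domRestrict v) := by
    have : s.domRestrict v = (fun j => (c j : EuclideanSpace ℝ (Fin n))) ∘
        fun i : s => (⟨i.1, i.2⟩ : Fin d) := by
      funext i
      have hi : ((i : Fin n) : ℕ) < d := i.2
      simp [v, hi]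
    rw [this]
    refine hc.comp _ fun i j hij => ?_
    ext
    simpa using hij
  obtain ⟨b, hb⟩ := hv.exists_orthonormalBasis_extension_of_card_eq (by simp)
  refine ⟨b, fun e => ?_⟩
  have hproj : e - N.starProjection e = Nᗮ.starProjection e := by
    rw [Submodule.starProjection_orthogonal_val]
  rw [hproj, Submodule.starProjection_apply, ← Submodule.coe_norm,
    ← c.sum_sq_inner_right]
  let g : ℕ → ℝ := fun j =>
    if h : j < d then (inner ℝ (c ⟨j, h⟩ : EuclideanSpace ℝ (Fin n)) e) ^ 2 else 0
  have hterm : ∀ i : Fin n, (if (i : ℕ) < d then (inner ℝ (b i) e) ^ 2 else 0) = g i := by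
    intro i
    by_cases h : (i : ℕ) < d
    · simp [g, h, hb i h, v]
    · simp [g, h]
  rw [Finset.sum_congr rfl fun i _ => hterm i, Fin.sum_univ_eq_sum_range g n,
    ← Finset.sum_subset (Finset.range_subset_range.2 hdn), ← Fin.sum_univ_eq_sum_range g d]
  · refine Finset.sum_congr rfl fun j _ => ?_
    rw [Submodule.inner_orthogonalProjectionOnto_eq_of_mem_left]
    simp [g]
  · intro j _ hj
    have : ¬ j < d := by simpa using hj
    simp [g, this]

/-- Rotation invariance: the law of a vector whose coordinates in an orthonormal basis `b` are
independent standard Gaussian does not depend on `b`. -/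
lemma map_pi_gaussian_eq {n : ℕ} (b : OrthonormalBasis (Fin n) ℝ (EuclideanSpace ℝ (Fin n))) :
    (Measure.pi fun _ : Fin n => gaussianReal 0 1).map (WithLp.toLp 2) =
      (Measure.pi fun _ : Fin n => gaussianReal 0 1).map (fun x => ∑ i, x i • b i) := by
  rw [map_pi_eq_stdGaussian, stdGaussian_eq_map_pi_orthonormalBasis b]

/-- The constrained infimum is attained, and equals the squared distance from `ε` to
`tangent K H`. -/
lemma sInf_eq_dist_sq {n p k : ℕ} (K : Matrix (Fin n) (Fin p) ℝ) (H : Matrix (Fin k) (Fin p) ℝ)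
    (xstar : Fin p → ℝ) (ε : Fin n → ℝ) :
    sInf {t : ℝ | ∃ x : Fin p → ℝ, H.mulVec x = H.mulVec xstar ∧
          t = sqNorm (K.mulVec x - (K.mulVec xstar + ε))} =
      ‖WithLp.toLp 2 ε - (tangent K H).starProjection (WithLp.toLp 2 ε)‖ ^ 2 := by
  have key : ∀ z, sqNorm (K.mulVec (xstar + z) - (K.mulVec xstar + ε)) =
      ‖WithLp.toLp 2 ε - WithLp.toLp 2 (K.mulVec z)‖ ^ 2 := by
    intro z
    rw [EuclideanSpace.real_norm_sq_eq, sqNorm]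
    refine Finset.sum_congr rfl fun i _ => ?_
    simp only [Matrix.mulVec_add, Pi.sub_apply, Pi.add_apply, PiLp.sub_apply]
    ring
  refine IsLeast.csInf_eq ⟨?_, ?_⟩
  · obtain ⟨z, hz, hz'⟩ := mem_tangent.1
      ((tangent K H).starProjection_apply_mem (WithLp.toLp 2 ε))
    refine ⟨xstar + z, by rw [Matrix.mulVec_add, hz, add_zero], ?_⟩
    rw [key, hz']
  · rintro t ⟨x, hx, rfl⟩
    have hm : WithLp.toLp 2 (K.mulVec (x - xstar)) ∈ tangent K H :=
      mem_tangent.2 ⟨x - xstar, by rw [Matrix.mulVec_sub, hx, sub_self], rfl⟩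
    have h := key (x - xstar)
    rw [add_sub_cancel] at h
    rw [h, Submodule.starProjection_minimal]
    refine pow_le_pow_left₀ (Real.iInf_nonneg fun _ => norm_nonneg _) ?_ 2
    exact ciInf_le ⟨0, by rintro _ ⟨_, rfl⟩; exact norm_nonneg _⟩
      (⟨_, hm⟩ : tangent K H)

/-- with `μ = Hx*` and `ε` standard Gaussian, the one-term statistic
`λ¹(μ, Kx* + ε) = inf_{x : Hx = μ} ‖Kx − (Kx* + ε)‖²` follows a chi-squared law with
`n − rank K + k` degrees of freedom, i.e., it has the law of the sum of squares of the
first `n − rank K + k` coordinates of `ε`. -/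
theorem stmt5 {n p k : ℕ} (K : Matrix (Fin n) (Fin p) ℝ) (H : Matrix (Fin k) (Fin p) ℝ)
    (hH : H.rank = k) (hrow : ∃ C : Matrix (Fin k) (Fin n) ℝ, H = C * K)
    (xstar : Fin p → ℝ) :
    (stdGaussian n).map
        (fun ε => sInf {t : ℝ | ∃ x : Fin p → ℝ, H.mulVec x = H.mulVec xstar ∧
          t = sqNorm (K.mulVec x - (K.mulVec xstar + ε))})
      = (stdGaussian n).map
          (fun ε => ∑ i : Fin n, if (i : ℕ) < n - K.rank + k then (ε i) ^ 2 else 0) := by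
  obtain ⟨b, hb⟩ := exists_orthonormalBasis_dist_sq (tangent K H)
  rw [finrank_tangent_orthogonal K H hH hrow] at hb
  simp_rw [sInf_eq_dist_sq, hb]
  set d := n - K.rank + k
  let F : EuclideanSpace ℝ (Fin n) → ℝ := fun e =>
    ∑ i : Fin n, if (i : ℕ) < d then (inner ℝ (b i) e) ^ 2 else 0
  have hF : Measurable F := by
    refine Finset.measurable_sum _ fun i _ => ?_
    split_ifs <;> fun_prop
  have hT : Measurable fun x : Fin n → ℝ => ∑ i, x i • b i := by fun_prop
  have hFT : (fun ε : Fin n → ℝ => ∑ i : Fin n, if (i : ℕ) < d then (ε i) ^ 2 else 0) =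
      F ∘ fun x => ∑ i, x i • b i := by
    funext x
    simp only [F, Function.comp_apply, b.orthonormal.inner_right_fintype]
  change (Measure.pi fun _ => gaussianReal 0 1).map (F ∘ WithLp.toLp 2) =
    (Measure.pi fun _ => gaussianReal 0 1).map _
  rw [hFT, ← Measure.map_map hF (by fun_prop), ← Measure.map_map hF hT, map_pi_gaussian_eq b]
end

section
/- Let K be a real n×p matrix, A a real m×p matrix, H a real k×p matrix, b ∈ ℝ^m and y ∈ ℝ^n, and suppose the polyhedron P = {x ∈ ℝ^p : Ax ≤ b, Kx = y} is nonempty. Then the set {Hx : x ∈ P} ⊆ ℝ^k is bounded if and only if every d ∈ ℝ^p with Kd = 0 and Ad ≤ 0 satisfies Hd = 0. -/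
/-!
If `Kd = 0`, `Ad ≤ 0` and `x₀ ∈ P`, the whole ray `x₀ + t d` (`t ≥ 0`) lies in `P`, so boundedness
of the image of `P` forces `Hd = 0`.

Conversely, polyhedrality enters through Farkas' lemma (`farkas_dual`, proved purely
algebraically). On the subspace `ker K`, each row `±hⱼ` of `±H` is nonpositive wherever all rows
`aᵢ` of `A` are, hence it is a nonnegative combination `∑ cᵢ aᵢ` there. For `x, x₀ ∈ P` the
difference `x - x₀` lies in `ker K`, so `±hⱼ(x - x₀) = ∑ cᵢ aᵢ(x - x₀) ≤ ∑ cᵢ (bᵢ - aᵢ x₀)`, a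
bound that does not depend on `x`.
-/

/-- **Farkas' lemma** for finitely many linear functionals on an arbitrary real vector space.
The induction (due to Bartl) removes the last functional by projecting along a vector `z` on which
`g` is positive while all the other functionals are nonpositive. -/
theorem farkas_dual {V : Type*} [AddCommGroup V] [Module ℝ V] {m : ℕ}
    (f : Fin m → V →ₗ[ℝ] ℝ) (g : V →ₗ[ℝ] ℝ)
    (h : ∀ d, (∀ i, f i d ≤ 0) → g d ≤ 0) :
    ∃ c : Fin m → ℝ, (∀ i, 0 ≤ c i) ∧ ∀ d, g d = ∑ i, c i * f i d := by
  induction m generalizing g with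
  | zero =>
    refine ⟨0, by simp, fun d => ?_⟩
    have h1 := h d (by simp)
    have h2 := h (-d) (by simp)
    simp only [map_neg] at h2
    simp only [Finset.univ_eq_empty, Finset.sum_empty]
    linarith
  | succ m ih =>
    by_cases hg : ∀ d, (∀ i : Fin m, f i.castSucc d ≤ 0) → g d ≤ 0
    · obtain ⟨c, hc, hcd⟩ := ih (fun i => f i.castSucc) g hg
      refine ⟨Fin.snoc c 0, fun i => ?_, fun d => ?_⟩
      · induction i using Fin.lastCases <;> simp [hc]
      · simp [Fin.sum_univ_castSucc, hcd d]
    · push Not at hg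
      obtain ⟨z, hz, hgz⟩ := hg
      have hlz : 0 < f (Fin.last m) z := by
        by_contra hneg
        refine absurd (h z fun i => ?_) (not_le.2 hgz)
        induction i using Fin.lastCases with
        | last => exact not_lt.1 hneg
        | cast i => exact hz i
      set l := f (Fin.last m) with hl
      set r := (l z)⁻¹ with hr
      have hr0 : 0 < r := inv_pos.2 hlz
      have hrl : r * l z = 1 := inv_mul_cancel₀ hlz.ne'
      -- Composing with the projection `d ↦ d - (l d / l z) z` onto `ker l`.
      obtain ⟨c, hc, hcd⟩ := ih (fun i => f i.castSucc - (r * f i.castSucc z) • l)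
        (g - (r * g z) • l) (fun d hd => by
          have key := h (d - (r * l d) • z) (fun i => by
            induction i using Fin.lastCases with
            | last =>
              simp only [← hl, map_sub, map_smul, smul_eq_mul]
              have : r * l d * l z = l d := by linear_combination l d * hrl
              linarith
            | cast i =>
              have := hd i
              simp only [LinearMap.sub_apply, LinearMap.smul_apply, map_sub, map_smul,
                smul_eq_mul] at this ⊢
              linarith)
          simp only [LinearMap.sub_apply, LinearMap.smul_apply, map_sub, map_smul,
            smul_eq_mul] at key ⊢
          linarith)
      refine ⟨Fin.snoc c (r * (g z - ∑ i, c i * f i.castSucc z)), fun i => ?_, fun d => ?_⟩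
      · induction i using Fin.lastCases with
        | last =>
          have : ∑ i, c i * f i.castSucc z ≤ 0 :=
            Finset.sum_nonpos fun i _ => mul_nonpos_of_nonneg_of_nonpos (hc i) (hz i)
          simp only [Fin.snoc_last]
          exact mul_nonneg hr0.le (by linarith)
        | cast i => simpa using hc i
      · have h1 := hcd d
        simp only [LinearMap.sub_apply, LinearMap.smul_apply, smul_eq_mul] at h1
        have h2 : ∑ i, c i * (f i.castSucc d - r * f i.castSucc z * l d)
            = ∑ i, c i * f i.castSucc d - r * l d * ∑ i, c i * f i.castSucc z := by
          rw [Finset.mul_sum, ← Finset.sum_sub_distrib]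
          exact Finset.sum_congr rfl fun i _ => by ring
        simp only [Fin.sum_univ_castSucc, Fin.snoc_castSucc, Fin.snoc_last, ← hl]
        linear_combination h1 + h2

/-- A linear functional that is nonpositive on the recession cone `{d : Kd = 0, Ad ≤ 0}` is bounded
above on the polyhedron `{x : Ax ≤ b, Kx = y}`. -/
theorem bddAbove_on_polyhedron {n p m : ℕ} (K : Matrix (Fin n) (Fin p) ℝ)
    (A : Matrix (Fin m) (Fin p) ℝ) (b : Fin m → ℝ) (y : Fin n → ℝ)
    (g : (Fin p → ℝ) →ₗ[ℝ] ℝ)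
    (hg : ∀ d : Fin p → ℝ, K.mulVec d = 0 → A.mulVec d ≤ 0 → g d ≤ 0) :
    ∃ C : ℝ, ∀ x : Fin p → ℝ, A.mulVec x ≤ b → K.mulVec x = y → g x ≤ C := by
  by_cases hne : ∃ x₀ : Fin p → ℝ, K.mulVec x₀ = y
  · obtain ⟨x₀, hKx₀⟩ := hne
    let W := LinearMap.ker K.mulVecLin
    obtain ⟨c, hc, hcd⟩ := farkas_dual
      (fun i => (LinearMap.proj i ∘ₗ A.mulVecLin) ∘ₗ W.subtype) (g ∘ₗ W.subtype)
      (fun d hd => hg d d.2 fun i => hd i)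
    refine ⟨g x₀ + ∑ i, c i * (b i - A.mulVec x₀ i), fun x hA hK => ?_⟩
    have hxW : x - x₀ ∈ W := by
      simp [W, LinearMap.mem_ker, Matrix.mulVec_sub, hK, hKx₀]
    have h1 : g (x - x₀) = ∑ i, c i * A.mulVec (x - x₀) i := hcd ⟨x - x₀, hxW⟩
    have h2 : ∑ i, c i * A.mulVec (x - x₀) i ≤ ∑ i, c i * (b i - A.mulVec x₀ i) := by
      refine Finset.sum_le_sum fun i _ => mul_le_mul_of_nonneg_left ?_ (hc i)
      rw [Matrix.mulVec_sub, Pi.sub_apply]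
      exact sub_le_sub_right (hA i) _
    rw [map_sub] at h1
    linarith
  · exact ⟨0, fun x _ hK => absurd ⟨x, hK⟩ hne⟩

/-- for a nonempty polyhedron `P = {x : Ax ≤ b, Kx = y}`, the image
`{Hx : x ∈ P}` is bounded iff every `d` with `Kd = 0` and `Ad ≤ 0` satisfies `Hd = 0`. -/
theorem stmt6 {n p m k : ℕ} (K : Matrix (Fin n) (Fin p) ℝ) (A : Matrix (Fin m) (Fin p) ℝ)
    (H : Matrix (Fin k) (Fin p) ℝ) (b : Fin m → ℝ) (y : Fin n → ℝ)
    (hne : ∃ x : Fin p → ℝ, A.mulVec x ≤ b ∧ K.mulVec x = y) :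
    Bornology.IsBounded
        {μ : Fin k → ℝ | ∃ x : Fin p → ℝ, A.mulVec x ≤ b ∧ K.mulVec x = y ∧ H.mulVec x = μ}
      ↔ ∀ d : Fin p → ℝ, K.mulVec d = 0 → A.mulVec d ≤ 0 → H.mulVec d = 0 := by
  constructor
  · intro hB d hK hA
    obtain ⟨x₀, hA₀, hK₀⟩ := hne
    obtain ⟨C, hC⟩ := hB.exists_norm_le
    have hray : ∀ t : ℕ, t * ‖H.mulVec d‖ ≤ C + ‖H.mulVec x₀‖ := fun t => by
      have h1 : ‖H.mulVec x₀ + (t : ℝ) • H.mulVec d‖ ≤ C := by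
        refine hC _ ⟨x₀ + (t : ℝ) • d, fun i => ?_, ?_, ?_⟩
        · have h2 := mul_nonpos_of_nonneg_of_nonpos (Nat.cast_nonneg (α := ℝ) t) (hA i)
          have h3 := hA₀ i
          simp only [Matrix.mulVec_add, Matrix.mulVec_smul, Pi.add_apply, Pi.smul_apply,
            smul_eq_mul]
          linarith
        · simp [Matrix.mulVec_add, Matrix.mulVec_smul, hK, hK₀]
        · simp [Matrix.mulVec_add, Matrix.mulVec_smul]
      have h4 := norm_sub_le (H.mulVec x₀ + (t : ℝ) • H.mulVec d) (H.mulVec x₀)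
      rw [add_sub_cancel_left, norm_smul, Real.norm_natCast] at h4
      linarith
    by_contra hd
    obtain ⟨t, ht⟩ := exists_nat_gt ((C + ‖H.mulVec x₀‖) / ‖H.mulVec d‖)
    rw [div_lt_iff₀ (norm_pos_iff.2 hd)] at ht
    exact absurd (hray t) (not_le.2 ht)
  · intro h
    have hup : ∀ j, ∃ C : ℝ, ∀ x : Fin p → ℝ, A.mulVec x ≤ b → K.mulVec x = y →
        H.mulVec x j ≤ C := fun j =>
      bddAbove_on_polyhedron K A b y (LinearMap.proj j ∘ₗ H.mulVecLin)
        fun d hK hA => (congrFun (h d hK hA) j).le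
    have hlo : ∀ j, ∃ C : ℝ, ∀ x : Fin p → ℝ, A.mulVec x ≤ b → K.mulVec x = y →
        -H.mulVec x j ≤ C := fun j =>
      bddAbove_on_polyhedron K A b y (-(LinearMap.proj j ∘ₗ H.mulVecLin))
        fun d hK hA => (neg_eq_zero.2 (congrFun (h d hK hA) j)).le
    choose U hU using hup
    choose L hL using hlo
    refine (Metric.isBounded_Icc (-L) U).subset ?_
    rintro _ ⟨x, hA, hK, rfl⟩
    exact ⟨fun j => neg_le.1 (hL j x hA hK), fun j => hU j x hA hK⟩
end

section
/- Let K be a real n×p matrix, A a real m×p matrix, b ∈ ℝ^m, y ∈ ℝ^n, h ∈ ℝ^p, and suppose the polyhedron P = {x ∈ ℝ^p : Ax ≤ b, Kx = y} is nonempty. Then the set of values {hᵀx : x ∈ P} ⊆ ℝ is bounded above if and only if every d ∈ ℝ^p with Ad ≤ 0 and Kd = 0 satisfies hᵀd ≤ 0; and it is bounded below if and only if every such d satisfies hᵀd ≥ 0. -/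
open Matrix

/-!
The easy direction moves from a feasible point along a recession direction `d` with `hᵀd > 0`,
along which `hᵀx` is unbounded. The converse rests on Farkas' lemma (`farkas`): applied on the
subspace `ker K`, it writes `h` there as a nonnegative combination `∑ λᵢ Aᵢ` of the rows of `A`.
Since feasible points differ by elements of `ker K`, for a fixed feasible `x₀` every feasible `x`
satisfies `hᵀx = hᵀx₀ + ∑ λᵢ (Aᵢx - Aᵢx₀) ≤ hᵀx₀ + ∑ λᵢ (bᵢ - Aᵢx₀)`.
The statement on lower bounds is the one on upper bounds for `-h`.
-/

/-- Farkas' lemma for finitely many linear functionals on a real vector space of any dimension.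
The proof is by induction on the number of functionals: when the last one, `f`, is needed, some `u`
with `f u = 1` violates the conclusion for the others, and the induction hypothesis is applied to
all functionals precomposed with the projection `x ↦ x - f x • u` onto `ker f`. -/
theorem farkas {V : Type*} [AddCommGroup V] [Module ℝ V] {m : ℕ}
    (a : Fin m → V →ₗ[ℝ] ℝ) (g : V →ₗ[ℝ] ℝ)
    (hg : ∀ x, (∀ i, a i x ≤ 0) → g x ≤ 0) :
    ∃ c : Fin m → ℝ, (∀ i, 0 ≤ c i) ∧ ∀ x, g x = ∑ i, c i * a i x := by
  induction m generalizing g with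
  | zero =>
    refine ⟨0, fun i => i.elim0, fun x => ?_⟩
    have h1 := hg x (fun i => i.elim0)
    have h2 := hg (-x) (fun i => i.elim0)
    rw [map_neg] at h2
    simp only [Finset.univ_eq_empty, Finset.sum_empty]
    linarith
  | succ m ih =>
    by_cases hlast : ∀ x, (∀ i : Fin m, a i.castSucc x ≤ 0) → g x ≤ 0
    · obtain ⟨c, hc, hgc⟩ := ih (fun i => a i.castSucc) g hlast
      refine ⟨Fin.snoc c 0, fun i => ?_, fun x => ?_⟩
      · refine Fin.lastCases ?_ (fun j => ?_) i
        · simp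
        · simpa using hc j
      · simpa [Fin.sum_univ_castSucc] using hgc x
    · push Not at hlast
      obtain ⟨v, hv, hgv⟩ := hlast
      set f := a (Fin.last m) with hf
      have hfv : 0 < f v := by
        by_contra hcon
        refine absurd (hg v fun i => ?_) (not_le.mpr hgv)
        exact Fin.lastCases (not_lt.mp hcon) hv i
      obtain ⟨u, hu, hgu, hfu⟩ :
          ∃ u, (∀ i : Fin m, a i.castSucc u ≤ 0) ∧ 0 < g u ∧ f u = 1 := by
        refine ⟨(f v)⁻¹ • v, fun i => ?_, ?_, ?_⟩
        · rw [map_smul, smul_eq_mul]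
          exact mul_nonpos_of_nonneg_of_nonpos (inv_pos.mpr hfv).le (hv i)
        · rw [map_smul, smul_eq_mul]
          exact mul_pos (inv_pos.mpr hfv) hgv
        · rw [map_smul, smul_eq_mul, inv_mul_cancel₀ hfv.ne']
      obtain ⟨c, hc, hgc⟩ := ih (fun i => a i.castSucc - a i.castSucc u • f) (g - g u • f) (by
        intro x hx
        have key := hg (x - f x • u) (fun i => by
          refine Fin.lastCases ?_ (fun j => ?_) i
          · rw [← hf, map_sub, map_smul, hfu]
            simp
          · have := hx j
            simp only [LinearMap.sub_apply, LinearMap.smul_apply, smul_eq_mul] at this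
            rw [map_sub, map_smul, smul_eq_mul]
            linarith)
        rw [map_sub, map_smul, smul_eq_mul] at key
        simp only [LinearMap.sub_apply, LinearMap.smul_apply, smul_eq_mul]
        linarith)
      refine ⟨Fin.snoc c (g u - ∑ i, c i * a i.castSucc u), fun i => ?_, fun x => ?_⟩
      · refine Fin.lastCases ?_ (fun j => ?_) i
        · rw [Fin.snoc_last]
          have : ∑ i, c i * a i.castSucc u ≤ 0 :=
            Finset.sum_nonpos fun i _ => mul_nonpos_of_nonneg_of_nonpos (hc i) (hu i)
          linarith
        · simpa using hc j
      · have := hgc x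
        simp only [LinearMap.sub_apply, LinearMap.smul_apply, smul_eq_mul, mul_sub,
          Finset.sum_sub_distrib, ← mul_assoc, ← Finset.sum_mul] at this
        simp only [Fin.sum_univ_castSucc, Fin.snoc_castSucc, Fin.snoc_last, ← hf]
        linarith

theorem bddAbove_iff {n p m : ℕ} (K : Matrix (Fin n) (Fin p) ℝ) (A : Matrix (Fin m) (Fin p) ℝ)
    (b : Fin m → ℝ) (y : Fin n → ℝ) (h : Fin p → ℝ)
    (hne : ∃ x : Fin p → ℝ, A.mulVec x ≤ b ∧ K.mulVec x = y) :
    BddAbove {t : ℝ | ∃ x : Fin p → ℝ, A.mulVec x ≤ b ∧ K.mulVec x = y ∧ t = h ⬝ᵥ x}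
      ↔ ∀ d : Fin p → ℝ, A.mulVec d ≤ 0 → K.mulVec d = 0 → h ⬝ᵥ d ≤ 0 := by
  obtain ⟨x₀, hA₀, hK₀⟩ := hne
  constructor
  · rintro ⟨M, hM⟩ d hAd hKd
    by_contra! hpos
    have hM₀ : h ⬝ᵥ x₀ ≤ M := hM ⟨x₀, hA₀, hK₀, rfl⟩
    -- The step length is chosen so that the objective at the new point is exactly `M + 1`.
    set s := (M + 1 - h ⬝ᵥ x₀) / (h ⬝ᵥ d) with hs
    have hs0 : 0 ≤ s := div_nonneg (by linarith) hpos.le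
    have hmem : h ⬝ᵥ (x₀ + s • d) ≤ M := by
      refine hM ⟨x₀ + s • d, fun i => ?_, ?_, rfl⟩
      · rw [mulVec_add, mulVec_smul, Pi.add_apply, Pi.smul_apply, smul_eq_mul]
        have h1 := hA₀ i
        have h2 := mul_nonpos_of_nonneg_of_nonpos hs0 (hAd i)
        linarith
      · rw [mulVec_add, mulVec_smul, hKd, hK₀, smul_zero, add_zero]
    rw [dotProduct_add, dotProduct_smul, smul_eq_mul, hs, div_mul_cancel₀ _ hpos.ne'] at hmem
    linarith
  · intro hd
    obtain ⟨c, hc, hgc⟩ := farkas (V := LinearMap.ker K.mulVecLin)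
      (fun i => (LinearMap.proj i ∘ₗ A.mulVecLin).domRestrict _)
      ((dotProductBilin ℝ ℝ h).domRestrict _)
      (fun x hx => hd x.1 (fun i => hx i) (LinearMap.mem_ker.mp x.2))
    refine ⟨h ⬝ᵥ x₀ + ∑ i, c i * (b i - A.mulVec x₀ i), ?_⟩
    rintro _ ⟨x, hAx, hKx, rfl⟩
    have hker : x - x₀ ∈ LinearMap.ker K.mulVecLin := by
      rw [LinearMap.mem_ker, mulVecLin_apply, mulVec_sub, hKx, hK₀, sub_self]
    have heq : h ⬝ᵥ (x - x₀) = ∑ i, c i * A.mulVec (x - x₀) i := hgc ⟨x - x₀, hker⟩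
    have hle : ∑ i, c i * A.mulVec (x - x₀) i ≤ ∑ i, c i * (b i - A.mulVec x₀ i) := by
      refine Finset.sum_le_sum fun i _ => mul_le_mul_of_nonneg_left ?_ (hc i)
      rw [mulVec_sub, Pi.sub_apply]
      have := hAx i
      linarith
    rw [dotProduct_sub] at heq
    linarith

/-- for a nonempty polyhedron `P = {x : Ax ≤ b, Kx = y}`, the value set
`{hᵀx : x ∈ P}` is bounded above iff every `d` with `Ad ≤ 0`, `Kd = 0` has `hᵀd ≤ 0`,
and bounded below iff every such `d` has `hᵀd ≥ 0`. -/
theorem stmt7 {n p m : ℕ} (K : Matrix (Fin n) (Fin p) ℝ) (A : Matrix (Fin m) (Fin p) ℝ)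
    (b : Fin m → ℝ) (y : Fin n → ℝ) (h : Fin p → ℝ)
    (hne : ∃ x : Fin p → ℝ, A.mulVec x ≤ b ∧ K.mulVec x = y) :
    (BddAbove {t : ℝ | ∃ x : Fin p → ℝ, A.mulVec x ≤ b ∧ K.mulVec x = y ∧ t = h ⬝ᵥ x}
        ↔ ∀ d : Fin p → ℝ, A.mulVec d ≤ 0 → K.mulVec d = 0 → h ⬝ᵥ d ≤ 0)
    ∧ (BddBelow {t : ℝ | ∃ x : Fin p → ℝ, A.mulVec x ≤ b ∧ K.mulVec x = y ∧ t = h ⬝ᵥ x}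
        ↔ ∀ d : Fin p → ℝ, A.mulVec d ≤ 0 → K.mulVec d = 0 → 0 ≤ h ⬝ᵥ d) := by
  refine ⟨bddAbove_iff K A b y h hne, ?_⟩
  have key := bddAbove_iff K A b y (-h) hne
  simp only [neg_dotProduct, Left.neg_nonpos_iff] at key
  rw [← key, ← bddAbove_neg]
  simp only [Set.neg_ofPred, neg_eq_iff_eq_neg]
end

section
/- Let A be a real m×p matrix, G a real l×p matrix, b ∈ ℝ^m, d ∈ ℝ^l, and let P := {x ∈ ℝ^p : Ax ≤ b, Gx ≤ d} be nonempty and pointed, meaning that the only v ∈ ℝ^p with Av ≤ 0, Gv ≤ 0, A(−v) ≤ 0 and G(−v) ≤ 0 is v = 0. Let Q : ℝ^p → ℝ be convex and recession-monotone, i.e., Q(x + v) ≤ Q(x) for all x ∈ ℝ^p and all v with Av ≤ 0 and Gv ≤ 0. Then for every x ∈ P there exists an extreme point q of P with Q(x) ≤ Q(q); in particular sup_{x ∈ P} Q(x) equals the supremum of Q over the extreme points of P. -/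
/-!
Every point `x` of `P` is pushed to an extreme point without decreasing `Q`, by induction on the
number of constraints that are slack at `x`. If the only direction annihilated by all the
constraints tight at `x` is `0`, then `x` is extreme (`mem_extremePoints_of_tight`). Otherwise
choose such a direction `v ≠ 0`.

* If some constraint increases along `v`, moving from `x` along `v` until the first slack constraint
  becomes tight stays in `P` and makes at least one more constraint tight (`exists_step`).
* If this is possible along both `v` and `-v`, then `x` lies between the two points reached, and by
  convexity one of them has a value of `Q` at least `Q x`.
* If no constraint increases along `v`, then `v` is a recession direction. By pointedness `-v` is
  not one, so a step along `-v` is possible, and it does not decrease `Q` by recession-monotonicity.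

The equality of suprema follows because each of the two value sets is dominated by the other.
-/

open Matrix

section Polyhedron

variable {ι E : Type*} [AddCommGroup E] [Module ℝ E]

/-- The polyhedron cut out by the inequalities `f i x ≤ c i`. -/
def polyhedron (f : ι → E →ₗ[ℝ] ℝ) (c : ι → ℝ) : Set E := {x | ∀ i, f i x ≤ c i}

variable {f : ι → E →ₗ[ℝ] ℝ} {c : ι → ℝ}

lemma mem_extremePoints_of_tight {x : E} (hx : x ∈ polyhedron f c)
    (h : ∀ v, (∀ i, f i x = c i → f i v = 0) → v = 0) :
    x ∈ Set.extremePoints ℝ (polyhedron f c) := by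
  rw [mem_extremePoints_iff_left]
  refine ⟨hx, fun y hy z hz hxyz => sub_eq_zero.1 (h _ fun i hi => ?_)⟩
  obtain ⟨s, t, hs, ht, hst, rfl⟩ := hxyz
  have hyi := hy i
  have hzi := hz i
  rw [map_sub, hi, sub_eq_zero]
  simp only [map_add, map_smul, smul_eq_mul] at hi
  have ht' : t * f i z ≤ t * c i := mul_le_mul_of_nonneg_left hzi ht.le
  have hs' : s * c i ≤ s * f i y := by
    have : c i = s * c i + t * c i := by rw [← add_mul, hst, one_mul]
    linarith
  exact le_antisymm hyi (le_of_mul_le_mul_left hs' hs)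

/-- The ratio test: moving along `v` until the first slack constraint becomes tight. -/
lemma exists_step [Fintype ι] {x v : E} (hx : x ∈ polyhedron f c)
    (hv : ∀ i, f i x = c i → f i v = 0) (hpos : ∃ i, 0 < f i v) :
    ∃ t : ℝ, 0 < t ∧ x + t • v ∈ polyhedron f c ∧
      {i | f i (x + t • v) < c i}.ncard < {i | f i x < c i}.ncard := by
  classical
  obtain ⟨i, hi, hmin⟩ := Finset.exists_min_image (Finset.univ.filter fun i => 0 < f i v)
    (fun i => (c i - f i x) / f i v) (by simpa [Finset.Nonempty] using hpos)
  simp only [Finset.mem_filter, Finset.mem_univ, true_and] at hi hmin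
  have hslack : f i x < c i := lt_of_le_of_ne (hx i) fun h => hi.ne' (hv i h)
  have ht : 0 < (c i - f i x) / f i v := div_pos (sub_pos.2 hslack) hi
  have heq : (c i - f i x) / f i v * f i v = c i - f i x := div_mul_cancel₀ _ hi.ne'
  generalize (c i - f i x) / f i v = t at hmin ht heq
  refine ⟨t, ht, fun j => ?_, ?_⟩
  · rw [map_add, map_smul, smul_eq_mul]
    rcases le_or_gt (f j v) 0 with hj | hj
    · have := hx j
      have := mul_nonpos_of_nonneg_of_nonpos ht.le hj
      linarith
    · have := (le_div_iff₀ hj).1 (hmin j hj)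
      linarith
  · refine Set.ncard_lt_ncard ((Set.ssubset_iff_of_subset fun j hj => ?_).2 ⟨i, hslack, ?_⟩)
      (Set.toFinite _)
    · refine lt_of_le_of_ne (hx j) fun h => ?_
      simp [hv j h, h] at hj
    · simp [heq]

theorem exists_extremePoint_ge [Fintype ι] {Q : E → ℝ} (hQ : ConvexOn ℝ Set.univ Q)
    (hpointed : ∀ v, (∀ i, f i v = 0) → v = 0)
    (hmono : ∀ x v, (∀ i, f i v ≤ 0) → Q (x + v) ≤ Q x) {x : E} (hx : x ∈ polyhedron f c) :
    ∃ q ∈ Set.extremePoints ℝ (polyhedron f c), Q x ≤ Q q := by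
  induction hn : {i | f i x < c i}.ncard using Nat.strong_induction_on generalizing x with
  | _ n ih =>
  subst hn
  by_cases h : ∀ v, (∀ i, f i x = c i → f i v = 0) → v = 0
  · exact ⟨x, mem_extremePoints_of_tight hx h, le_rfl⟩
  push Not at h
  obtain ⟨v, hv, hv0⟩ := h
  -- It suffices to reach a point of `P` with fewer slack constraints and no smaller value.
  suffices ∃ y ∈ polyhedron f c, {i | f i y < c i}.ncard < {i | f i x < c i}.ncard ∧ Q x ≤ Q y by
    obtain ⟨y, hy, hlt, hxy⟩ := this
    obtain ⟨q, hq, hyq⟩ := ih _ hlt hy rfl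
    exact ⟨q, hq, hxy.trans hyq⟩
  -- A step against a recession direction.
  have recede : ∀ w, w ≠ 0 → (∀ i, f i x = c i → f i w = 0) → (∀ i, f i w ≤ 0) →
      ∃ y ∈ polyhedron f c, {i | f i y < c i}.ncard < {i | f i x < c i}.ncard ∧ Q x ≤ Q y := by
    intro w hw0 hw hrec
    have hpos : ∃ i, 0 < f i (-w) := by
      by_contra! hcon
      exact hw0 (hpointed w fun i => le_antisymm (hrec i) (by simpa using hcon i))
    obtain ⟨t, ht, hmem, hlt⟩ := exists_step hx (fun i hi => by simp [hw i hi]) hpos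
    refine ⟨_, hmem, hlt, ?_⟩
    have := hmono (x + t • -w) (t • w) fun i => by
      simpa using mul_nonpos_of_nonneg_of_nonpos ht.le (hrec i)
    simpa using this
  have hv' : ∀ i, f i x = c i → f i (-v) = 0 := fun i hi => by simp [hv i hi]
  by_cases h₁ : ∃ i, 0 < f i v
  · by_cases h₂ : ∃ i, 0 < f i (-v)
    · obtain ⟨s, hs, hsmem, hslt⟩ := exists_step hx hv h₁
      obtain ⟨t, ht, htmem, htlt⟩ := exists_step hx hv' h₂
      have hseg : x ∈ segment ℝ (x + s • v) (x + t • -v) := by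
        refine ⟨t / (s + t), s / (s + t), by positivity, by positivity, by field_simp; ring, ?_⟩
        have hst : s + t ≠ 0 := by positivity
        match_scalars <;> field_simp <;> ring
      rcases le_max_iff.1 (hQ.le_max_of_mem_segment trivial trivial hseg) with h | h
      exacts [⟨_, hsmem, hslt, h⟩, ⟨_, htmem, htlt, h⟩]
    · push Not at h₂
      exact recede (-v) (neg_ne_zero.2 hv0) hv' h₂
  · push Not at h₁
    exact recede v hv0 hv h₁

end Polyhedron

/-- over a nonempty pointed polyhedron `P = {x : Ax ≤ b, Gx ≤ d}`, a convex
recession-monotone function `Q` is dominated at each point of `P` by its value at some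
extreme point of `P`; in particular `sup_P Q = sup over extreme points of P of Q`. -/
theorem stmt14 {m l p : ℕ} (A : Matrix (Fin m) (Fin p) ℝ) (G : Matrix (Fin l) (Fin p) ℝ)
    (b : Fin m → ℝ) (d : Fin l → ℝ)
    (hne : ∃ x : Fin p → ℝ, A.mulVec x ≤ b ∧ G.mulVec x ≤ d)
    (hpointed : ∀ v : Fin p → ℝ, A.mulVec v ≤ 0 → G.mulVec v ≤ 0 →
      A.mulVec (-v) ≤ 0 → G.mulVec (-v) ≤ 0 → v = 0)
    (Q : (Fin p → ℝ) → ℝ) (hQ : ConvexOn ℝ Set.univ Q)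
    (hmono : ∀ (x v : Fin p → ℝ), A.mulVec v ≤ 0 → G.mulVec v ≤ 0 → Q (x + v) ≤ Q x) :
    (∀ x ∈ {x : Fin p → ℝ | A.mulVec x ≤ b ∧ G.mulVec x ≤ d},
      ∃ q ∈ Set.extremePoints ℝ {x : Fin p → ℝ | A.mulVec x ≤ b ∧ G.mulVec x ≤ d},
        Q x ≤ Q q)
    ∧ sSup (Q '' {x : Fin p → ℝ | A.mulVec x ≤ b ∧ G.mulVec x ≤ d})
        = sSup (Q '' Set.extremePoints ℝ {x : Fin p → ℝ | A.mulVec x ≤ b ∧ G.mulVec x ≤ d}) := by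
  -- Both blocks of inequalities are merged into one family indexed by `Fin m ⊕ Fin l`.
  have hP : {x : Fin p → ℝ | A.mulVec x ≤ b ∧ G.mulVec x ≤ d} =
      polyhedron (Sum.elim (fun i => LinearMap.proj i ∘ₗ A.mulVecLin)
        (fun j => LinearMap.proj j ∘ₗ G.mulVecLin)) (Sum.elim b d) := by
    ext x
    simp [polyhedron, Pi.le_def]
  have key : ∀ x ∈ {x : Fin p → ℝ | A.mulVec x ≤ b ∧ G.mulVec x ≤ d},
      ∃ q ∈ Set.extremePoints ℝ {x : Fin p → ℝ | A.mulVec x ≤ b ∧ G.mulVec x ≤ d},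
        Q x ≤ Q q := by
    rw [hP]
    intro x hx
    refine exists_extremePoint_ge hQ (fun v hv => ?_) (fun x v hv => ?_) hx
    · have hA : A.mulVec v = 0 := funext fun i => hv (Sum.inl i)
      have hG : G.mulVec v = 0 := funext fun j => hv (Sum.inr j)
      exact hpointed v hA.le hG.le (by simp [mulVec_neg, hA]) (by simp [mulVec_neg, hG])
    · exact hmono x v (fun i => hv (Sum.inl i)) (fun j => hv (Sum.inr j))
  refine ⟨key, csSup_eq_csSup_of_forall_exists_le ?_ ?_⟩
  · rintro _ ⟨x, hx, rfl⟩
    obtain ⟨q, hq, hxq⟩ := key x hx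
    exact ⟨_, ⟨q, hq, rfl⟩, hxq⟩
  · rintro _ ⟨q, hq, rfl⟩
    exact ⟨_, ⟨q, extremePoints_subset hq, rfl⟩, le_rfl⟩
end

section
/- Fix n ≥ 2 and σ > 0, and let ν be the centered Gaussian product measure on ℝⁿ with per-coordinate variance σ² (the n-fold product of gaussianReal 0 σ²). Let A := {ε ∈ ℝⁿ : ε_i ≥ 0 for i = 1,…,n−1, and ε_i + ε_n ≤ 0 for i = 1,…,n−1}. Then ν(A) = 1/(n · 2ⁿ). -/
/-!
Let `B k` be the set of points of the nonnegative orthant whose largest coordinate is the `k`-th.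
These `n` sets cover the orthant, which has measure `2⁻ⁿ`; they overlap only where two coordinates
agree, a null set; and they have equal measure, since the product measure is invariant under
permuting coordinates. Hence each `B k` has measure `1 / (n 2ⁿ)`. The corner region is the preimage
of `B (n - 1)` under the measure-preserving map that negates the last coordinate.
-/

open MeasureTheory ProbabilityTheory

/-- The points of the nonnegative orthant of `ℝⁿ` at which the `k`-th coordinate is maximal. -/
def maxCone {n : ℕ} (k : Fin n) : Set (Fin n → ℝ) := {x | ∀ i, 0 ≤ x i ∧ x i ≤ x k}

lemma measurableSet_maxCone {n : ℕ} (k : Fin n) : MeasurableSet (maxCone k) := by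
  have : maxCone k = ⋂ i, ({x | 0 ≤ x i} ∩ {x | x i ≤ x k}) := by
    ext x; simp [maxCone]
  rw [this]
  exact MeasurableSet.iInter fun i =>
    (measurableSet_le measurable_const (measurable_pi_apply i)).inter
      (measurableSet_le (measurable_pi_apply i) (measurable_pi_apply k))

lemma measurePreserving_neg_gaussian (v : NNReal) :
    MeasurePreserving (fun x : ℝ => -x) (gaussianReal 0 v) (gaussianReal 0 v) :=
  ⟨measurable_neg, by simpa using gaussianReal_map_neg (μ := 0) (v := v)⟩

lemma gaussianReal_Ici_zero {v : NNReal} (hv : v ≠ 0) :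
    gaussianReal 0 v (Set.Ici 0) = 2⁻¹ := by
  have := nullSingletonClass_gaussianReal (μ := 0) hv
  have h1 : gaussianReal 0 v (Set.Iio 0) = gaussianReal 0 v (Set.Ici 0) := by
    have h := (measurePreserving_neg_gaussian v).measure_preimage
      (measurableSet_Ici (a := (0 : ℝ))).nullMeasurableSet
    rw [← h, measure_congr (Iio_ae_eq_Iic (a := (0 : ℝ)))]
    congr 1; ext x; simp
  have h2 : gaussianReal 0 v (Set.Ici 0) + gaussianReal 0 v (Set.Iio 0) = 1 := by
    rw [← Set.compl_Ici, measure_add_measure_compl measurableSet_Ici, measure_univ]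
  rw [h1, ← two_mul] at h2
  exact ENNReal.eq_inv_of_mul_eq_one_left (by rwa [mul_comm])

lemma pi_gaussian_orthant (n : ℕ) {v : NNReal} (hv : v ≠ 0) :
    (Measure.pi fun _ : Fin n => gaussianReal 0 v) {x | ∀ i, 0 ≤ x i} = (2 ^ n)⁻¹ := by
  have : {x : Fin n → ℝ | ∀ i, 0 ≤ x i} = Set.univ.pi fun _ => Set.Ici 0 := by
    ext x; simp only [Set.mem_univ_pi, Set.mem_Ici]; rfl
  rw [this, Measure.pi_pi]
  simp [gaussianReal_Ici_zero hv, ENNReal.inv_pow]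

/-- Two distinct coordinates have independent atomless laws, so the diagonal is null by Fubini. -/
lemma pi_gaussian_tie {n : ℕ} {v : NNReal} (hv : v ≠ 0) {i j : Fin n} (hij : i ≠ j) :
    (Measure.pi fun _ : Fin n => gaussianReal 0 v) {x | x i = x j} = 0 := by
  have := nullSingletonClass_gaussianReal (μ := 0) hv
  set μ := Measure.pi fun _ : Fin n => gaussianReal 0 v with hμ
  have hind : IndepFun (fun x : Fin n → ℝ => x i) (fun x => x j) μ :=
    (iIndepFun_pi (μ := fun _ : Fin n => gaussianReal 0 v) (X := fun _ => id)
      (fun _ => aemeasurable_id)).indepFun hij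
  have hprod := (indepFun_iff_map_prod_eq_prod_map_map
    (measurable_pi_apply i).aemeasurable (measurable_pi_apply j).aemeasurable).1 hind
  have hi : ∀ k, μ.map (fun x => x k) = gaussianReal 0 v := fun k =>
    (measurePreserving_eval (fun _ : Fin n => gaussianReal 0 v) k).map_eq
  rw [hi, hi] at hprod
  have hd : MeasurableSet {p : ℝ × ℝ | p.1 = p.2} :=
    measurableSet_eq_fun measurable_fst measurable_snd
  have h0 : ((gaussianReal 0 v).prod (gaussianReal 0 v)) {p : ℝ × ℝ | p.1 = p.2} = 0 := by
    rw [Measure.measure_prod_null hd]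
    refine Filter.Eventually.of_forall fun x => ?_
    have : Prod.mk x ⁻¹' {p : ℝ × ℝ | p.1 = p.2} = {x} := by ext y; simp [eq_comm]
    simp [this]
  rw [← hprod, Measure.map_apply (by fun_prop) hd] at h0
  exact h0

/-- Swapping coordinates `k` and `l` preserves the measure and exchanges the two cones. -/
lemma pi_gaussian_maxCone_eq {n : ℕ} (v : NNReal) (k l : Fin n) :
    (Measure.pi fun _ : Fin n => gaussianReal 0 v) (maxCone k)
      = (Measure.pi fun _ : Fin n => gaussianReal 0 v) (maxCone l) := by
  have h := (measurePreserving_piCongrLeft (fun _ : Fin n => gaussianReal 0 v)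
    (Equiv.swap k l)).measure_preimage (measurableSet_maxCone k).nullMeasurableSet
  rw [← h]
  congr 1
  ext x
  have hx : ∀ i, MeasurableEquiv.piCongrLeft (fun _ : Fin n => ℝ) (Equiv.swap k l) x i
      = x (Equiv.swap k l i) := fun i => by
    have := MeasurableEquiv.piCongrLeft_apply_apply (β := fun _ : Fin n => ℝ) (Equiv.swap k l) x
      (Equiv.swap k l i)
    simpa using this
  simp only [maxCone, Set.mem_preimage, Set.mem_ofPred_eq, hx, Equiv.swap_apply_left]
  exact (Equiv.swap k l).forall_congr_left.trans (by simp)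

/-- The cones `maxCone l` tile the orthant up to null sets and have equal measure. -/
lemma pi_gaussian_maxCone {n : ℕ} {v : NNReal} (hv : v ≠ 0) (k : Fin n) :
    (Measure.pi fun _ : Fin n => gaussianReal 0 v) (maxCone k) = 1 / (n * 2 ^ n) := by
  have hU : (⋃ l : Fin n, maxCone l) = {x | ∀ i, 0 ≤ x i} := by
    ext x
    simp only [Set.mem_iUnion, maxCone, Set.mem_ofPred_eq]
    refine ⟨fun ⟨l, hl⟩ i => (hl i).1, fun h => ?_⟩
    have : Nonempty (Fin n) := ⟨k⟩
    obtain ⟨l, hl⟩ := Finite.exists_max x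
    exact ⟨l, fun i => ⟨h i, hl i⟩⟩
  have hsum := measure_iUnion₀ (μ := Measure.pi fun _ : Fin n => gaussianReal 0 v)
    (f := fun l : Fin n => maxCone l)
    (fun i j hij => measure_mono_null
      (fun x hx => le_antisymm (hx.2 i).2 (hx.1 j).2) (pi_gaussian_tie hv hij))
    (fun l => (measurableSet_maxCone l).nullMeasurableSet)
  rw [hU, pi_gaussian_orthant n hv, tsum_fintype,
    Finset.sum_congr rfl fun l _ => pi_gaussian_maxCone_eq v l k] at hsum
  simp only [Finset.sum_const, Finset.card_univ, Fintype.card_fin, nsmul_eq_mul] at hsum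
  have hn : (n : ENNReal) ≠ 0 := by
    have := k.pos
    exact_mod_cast this.ne'
  rw [one_div, ENNReal.mul_inv (Or.inl hn) (Or.inl (ENNReal.natCast_ne_top n)), hsum,
    ← mul_assoc, ENNReal.inv_mul_cancel hn (ENNReal.natCast_ne_top n), one_mul]

/-- for `n ≥ 2` and i.i.d. centered Gaussians with variance `σ² > 0`, the
probability of the corner region
`A = {ε : εᵢ ≥ 0 and εᵢ + εₙ ≤ 0 for i = 1, …, n−1}` equals `1 / (n 2ⁿ)`. -/
theorem stmt18 {n : ℕ} (hn : 2 ≤ n) (σ : NNReal) (hσ : 0 < σ) :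
    (Measure.pi fun _ : Fin n => gaussianReal 0 (σ ^ 2))
        {ε : Fin n → ℝ | ∀ i : Fin n, (i : ℕ) < n - 1 →
          0 ≤ ε i ∧ ε i + ε ⟨n - 1, by omega⟩ ≤ 0}
      = 1 / (n * 2 ^ n) := by
  have hv : σ ^ 2 ≠ 0 := (pow_pos hσ 2).ne'
  set m : Fin n := ⟨n - 1, by omega⟩ with hm
  have hflip : MeasurePreserving
      (fun (x : Fin n → ℝ) i => (if i = m then fun y : ℝ => -y else id) (x i))
      (Measure.pi fun _ : Fin n => gaussianReal 0 (σ ^ 2))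
      (Measure.pi fun _ : Fin n => gaussianReal 0 (σ ^ 2)) := by
    refine measurePreserving_pi _ _ fun i => ?_
    split_ifs
    · exact measurePreserving_neg_gaussian _
    · exact MeasurePreserving.id _
  rw [← pi_gaussian_maxCone hv m,
    ← hflip.measure_preimage (measurableSet_maxCone m).nullMeasurableSet]
  congr 1
  ext x
  have hlt : ∀ i : Fin n, (i : ℕ) < n - 1 ↔ i ≠ m := fun i => by
    rw [Ne, Fin.ext_iff]
    have := i.isLt
    simp only [hm]
    omega
  simp only [maxCone, Set.mem_ofPred_eq, Set.mem_preimage, hlt, if_true]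
  constructor
  · intro h i
    -- Nonnegativity of the flipped last coordinate comes from any other index, as `n ≥ 2`.
    have h0 := h ⟨0, by omega⟩ (by rw [← hlt]; simp only; omega)
    by_cases hi : i = m
    · subst hi
      simp only [if_true]
      exact ⟨by linarith, le_rfl⟩
    · have := h i hi
      simp only [hi, if_false, id]
      exact ⟨this.1, by linarith⟩
  · intro h i hi
    have := h i
    simp only [hi, if_false, id] at this
    exact ⟨this.1, by linarith⟩
end

section
/- Let K be a real n×p matrix, H a real k×p matrix, A a real m×p matrix, b ∈ ℝ^m, y ∈ ℝⁿ, and c ∈ ℝ. Then the image set {Hx : x ∈ ℝ^p, Ax ≤ b, ‖Kx − y‖² ≤ c} equals {μ ∈ ℝ^k : the set {x : Hx = μ, Ax ≤ b} is nonempty and inf{‖Kx − y‖² : Hx = μ, Ax ≤ b} ≤ c}; in particular, whenever {x : Hx = μ, Ax ≤ b} is nonempty, the infimum of the quadratic x ↦ ‖Kx − y‖² over this polyhedron is attained. -/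
/-!
The heart of the matter is that the image of a polyhedron under a linear map is closed
(`isClosed_image_polyhedron`). Granting this, the map `x ↦ (Hx, Kx)` sends `{x : Ax ≤ b}` to a
closed set, whose slice over `μ` is a closed subset of Euclidean space and so has a point nearest
to `y`; this is the attainment of the infimum. The equality of the two sets follows.

For closedness, let `L x_j → z` with each `x_j` of minimal norm among the points of the polyhedron
having the same image. If `x_j` has a bounded subsequence, a cluster point is a preimage of `z`.
Otherwise, along a subsequence, `x_j / ‖x_j‖` tends to a unit vector `d` with `L d = 0` and
`a_i d ≤ 0` for all `i`. For large `j` the point `x_j - d` still lies in the polyhedron: constraints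
with `a_i d = 0` are unaffected, and the others have slack tending to infinity. Its image is
`L x_j`, yet it is shorter than `x_j`, a contradiction.
-/

open Matrix

open Filter Topology

/-- A linear map on a finite-dimensional space sends polyhedra to closed sets. -/
theorem isClosed_image_polyhedron {E F ι : Type*} [NormedAddCommGroup E] [InnerProductSpace ℝ E]
    [FiniteDimensional ℝ E] [NormedAddCommGroup F] [NormedSpace ℝ F] [Finite ι]
    (a : ι → E →L[ℝ] ℝ) (b : ι → ℝ) (L : E →L[ℝ] F) :
    IsClosed (L '' {x | ∀ i, a i x ≤ b i}) := by
  have : ProperSpace E := FiniteDimensional.proper ℝ E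
  have hPc : IsClosed {x | ∀ i, a i x ≤ b i} := by
    rw [Set.ofPred_forall]
    exact isClosed_iInter fun i => isClosed_le (a i).continuous continuous_const
  apply IsSeqClosed.isClosed
  intro u z hu huz
  have hmin : ∀ j, ∃ x, (∀ i, a i x ≤ b i) ∧ L x = u j ∧
      ∀ x', (∀ i, a i x' ≤ b i) → L x' = u j → ‖x‖ ≤ ‖x'‖ := by
    intro j
    have hc : IsClosed ({x | ∀ i, a i x ≤ b i} ∩ L ⁻¹' {u j}) :=
      hPc.inter (isClosed_singleton.preimage L.continuous)
    obtain ⟨x₀, h₀, h₁⟩ := hu j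
    obtain ⟨x, ⟨hx, hLx⟩, hd⟩ := hc.exists_infDist_eq_dist ⟨x₀, h₀, h₁⟩ 0
    refine ⟨x, hx, hLx, fun x' hx' hLx' => ?_⟩
    have h := Metric.infDist_le_dist_of_mem (x := (0 : E))
      (show x' ∈ {x | ∀ i, a i x ≤ b i} ∩ L ⁻¹' {u j} from ⟨hx', hLx'⟩)
    rw [hd] at h
    simpa using h
  -- Minimal norm within the fibre is what rules out escape to infinity below.
  choose x hxP hxL hxmin using hmin
  by_cases hb : ∃ R, ∃ᶠ j in atTop, ‖x j‖ ≤ R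
  · obtain ⟨R, hR⟩ := hb
    obtain ⟨w, -, φ, hφ, hw⟩ := tendsto_subseq_of_frequently_bounded
      (Metric.isBounded_closedBall (x := (0 : E)) (r := R)) (x := x)
      (hR.mono fun j hj => by simpa using hj)
    refine ⟨w, hPc.mem_of_tendsto hw (Eventually.of_forall fun j => hxP _), ?_⟩
    refine tendsto_nhds_unique ((L.continuous.tendsto w).comp hw) ?_
    refine (huz.comp hφ.tendsto_atTop).congr fun j => ?_
    simp [hxL]
  · exfalso
    push Not at hb
    have hinf : Tendsto (fun j => ‖x j‖) atTop atTop :=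
      tendsto_atTop.2 fun R => (hb R).mono fun j hj => hj.le
    obtain ⟨d, -, φ, hφ, hd⟩ := tendsto_subseq_of_bounded
      (Metric.isBounded_closedBall (x := (0 : E)) (r := 1)) (x := fun j => ‖x j‖⁻¹ • x j)
      (fun j => by
        simp only [mem_closedBall_zero_iff, norm_smul, norm_inv, norm_norm]
        exact inv_mul_le_one)
    have hN : Tendsto (fun j => ‖x (φ j)‖) atTop atTop := hinf.comp hφ.tendsto_atTop
    have hpos : ∀ᶠ j in atTop, 0 < ‖x (φ j)‖ := hN.eventually_gt_atTop 0
    have hN' : Tendsto (fun j => ‖x (φ j)‖⁻¹) atTop (𝓝 0) := tendsto_inv_atTop_zero.comp hN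
    have hd1 : ‖d‖ = 1 := by
      refine tendsto_nhds_unique hd.norm (tendsto_const_nhds.congr' ?_)
      filter_upwards [hpos] with j hj
      simp [norm_smul, inv_mul_cancel₀ hj.ne']
    have hLd : L d = 0 := by
      refine tendsto_nhds_unique ((L.continuous.tendsto d).comp hd) ?_
      have h := hN'.smul (huz.comp hφ.tendsto_atTop)
      rw [zero_smul] at h
      refine h.congr fun j => ?_
      simp [hxL]
    have had : ∀ i, Tendsto (fun j => ‖x (φ j)‖⁻¹ * a i (x (φ j))) atTop (𝓝 (a i d)) := by
      intro i
      refine (((a i).continuous.tendsto d).comp hd).congr fun j => ?_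
      simp
    have had0 : ∀ i, a i d ≤ 0 := by
      intro i
      have h := hN'.mul_const (b i)
      rw [zero_mul] at h
      exact le_of_tendsto_of_tendsto' (had i) h fun j =>
        mul_le_mul_of_nonneg_left (hxP _ i) (by positivity)
    have hmem : ∀ i, ∀ᶠ j in atTop, a i (x (φ j) - d) ≤ b i := by
      intro i
      rcases (had0 i).eq_or_lt with h0 | hlt
      · exact Eventually.of_forall fun j => by simpa [h0] using hxP (φ j) i
      · filter_upwards [(hN.atTop_mul_neg hlt (had i)).eventually_le_atBot (b i + a i d), hpos]
          with j hj hp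
        rw [mul_inv_cancel_left₀ hp.ne'] at hj
        rw [map_sub]
        linarith
    -- The function is `⟪x (φ j), d⟫`, written as norm times direction; its growth makes `x (φ j) - d`
    -- shorter than `x (φ j)`.
    have hinner : Tendsto (fun j => ‖x (φ j)‖ * inner ℝ (‖x (φ j)‖⁻¹ • x (φ j)) d)
        atTop atTop := by
      refine hN.atTop_mul_pos (C := inner ℝ d d) ?_ (hd.inner tendsto_const_nhds)
      simp [hd1]
    obtain ⟨j, hj, hp, hm⟩ :=
      ((hinner.eventually_gt_atTop 1).and (hpos.and (eventually_all.2 hmem))).exists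
    rw [real_inner_smul_left, mul_inv_cancel_left₀ hp.ne'] at hj
    have h1 := hxmin (φ j) (x (φ j) - d) hm (by simp [hLd, hxL])
    have h2 := norm_sub_sq_real (x (φ j)) d
    rw [hd1] at h2
    have h3 := pow_le_pow_left₀ (norm_nonneg _) h1 2
    linarith

/-- The Frank–Wolfe property, with the minimum expressed without `sInf`. -/
theorem exists_sqNorm_min {n p k m : ℕ} (K : Matrix (Fin n) (Fin p) ℝ)
    (H : Matrix (Fin k) (Fin p) ℝ) (A : Matrix (Fin m) (Fin p) ℝ) (b : Fin m → ℝ)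
    (y : Fin n → ℝ) (μ : Fin k → ℝ) (hne : ∃ x : Fin p → ℝ, H.mulVec x = μ ∧ A.mulVec x ≤ b) :
    ∃ x : Fin p → ℝ, H.mulVec x = μ ∧ A.mulVec x ≤ b ∧
      ∀ x', H.mulVec x' = μ → A.mulVec x' ≤ b →
        sqNorm (K.mulVec x - y) ≤ sqNorm (K.mulVec x' - y) := by
  have hsq : ∀ v : Fin n → ℝ, sqNorm (v - y) = dist (WithLp.toLp 2 y) (WithLp.toLp 2 v) ^ 2 := by
    intro v
    rw [dist_comm, EuclideanSpace.dist_eq, Real.sq_sqrt (by positivity)]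
    simp [sqNorm, Real.dist_eq, sq_abs]
  let a : Fin m → EuclideanSpace ℝ (Fin p) →L[ℝ] ℝ := fun i => LinearMap.toContinuousLinearMap
    (LinearMap.proj i ∘ₗ A.mulVecLin ∘ₗ (WithLp.linearEquiv 2 ℝ (Fin p → ℝ)).toLinearMap)
  let L : EuclideanSpace ℝ (Fin p) →L[ℝ] (Fin k → ℝ) × EuclideanSpace ℝ (Fin n) :=
    LinearMap.toContinuousLinearMap
      ((H.mulVecLin ∘ₗ (WithLp.linearEquiv 2 ℝ (Fin p → ℝ)).toLinearMap).prod
        ((WithLp.linearEquiv 2 ℝ (Fin n → ℝ)).symm.toLinearMap ∘ₗ K.mulVecLin ∘ₗ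
          (WithLp.linearEquiv 2 ℝ (Fin p → ℝ)).toLinearMap))
  have ha : ∀ i (x : Fin p → ℝ), a i (WithLp.toLp 2 x) = A.mulVec x i := fun i x => rfl
  have hL : ∀ x : Fin p → ℝ,
      L (WithLp.toLp 2 x) = (H.mulVec x, WithLp.toLp 2 (K.mulVec x)) := fun x => rfl
  -- The values `K x` over the fibre `H x = μ`, as a slice of the closed image of the polyhedron.
  have hS : IsClosed ((fun w : EuclideanSpace ℝ (Fin n) => (μ, w)) ⁻¹'
      (L '' {x | ∀ i, a i x ≤ b i})) :=
    (isClosed_image_polyhedron a b L).preimage (by fun_prop)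
  have hmem : ∀ x : Fin p → ℝ, H.mulVec x = μ → A.mulVec x ≤ b →
      WithLp.toLp 2 (K.mulVec x) ∈ (fun w : EuclideanSpace ℝ (Fin n) => (μ, w)) ⁻¹'
        (L '' {x | ∀ i, a i x ≤ b i}) :=
    fun x h1 h2 => ⟨WithLp.toLp 2 x, fun i => h2 i, by rw [hL, h1]⟩
  obtain ⟨x₀, h1, h2⟩ := hne
  obtain ⟨w, ⟨x, hx, hxw⟩, hw⟩ :=
    hS.exists_infDist_eq_dist ⟨_, hmem x₀ h1 h2⟩ (WithLp.toLp 2 y)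
  have hxw' : (H.mulVec x.ofLp, WithLp.toLp 2 (K.mulVec x.ofLp)) = (μ, w) := hxw
  rw [Prod.mk.injEq] at hxw'
  refine ⟨x.ofLp, hxw'.1, hx, fun x' h1' h2' => ?_⟩
  rw [hsq, hsq, hxw'.2, ← hw]
  have hle := Metric.infDist_le_dist_of_mem (x := WithLp.toLp 2 y) (hmem x' h1' h2')
  exact pow_le_pow_left₀ Metric.infDist_nonneg hle 2

/-- the image set `{Hx : Ax ≤ b, ‖Kx − y‖² ≤ c}` equals
`{μ : {x : Hx = μ, Ax ≤ b} ≠ ∅ and inf{‖Kx − y‖² : Hx = μ, Ax ≤ b} ≤ c}`; moreover, by the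
Frank–Wolfe property, whenever `{x : Hx = μ, Ax ≤ b}` is nonempty the infimum of
`x ↦ ‖Kx − y‖²` over it is attained. -/
theorem stmt19 {n p k m : ℕ} (K : Matrix (Fin n) (Fin p) ℝ) (H : Matrix (Fin k) (Fin p) ℝ)
    (A : Matrix (Fin m) (Fin p) ℝ) (b : Fin m → ℝ) (y : Fin n → ℝ) (c : ℝ) :
    ({μ : Fin k → ℝ | ∃ x : Fin p → ℝ, H.mulVec x = μ ∧ A.mulVec x ≤ b ∧
          sqNorm (K.mulVec x - y) ≤ c}
      = {μ : Fin k → ℝ | (∃ x : Fin p → ℝ, H.mulVec x = μ ∧ A.mulVec x ≤ b) ∧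
          sInf {t : ℝ | ∃ x : Fin p → ℝ, H.mulVec x = μ ∧ A.mulVec x ≤ b ∧
            t = sqNorm (K.mulVec x - y)} ≤ c})
    ∧ ∀ μ : Fin k → ℝ, (∃ x : Fin p → ℝ, H.mulVec x = μ ∧ A.mulVec x ≤ b) →
        ∃ x : Fin p → ℝ, H.mulVec x = μ ∧ A.mulVec x ≤ b ∧
          sqNorm (K.mulVec x - y)
            = sInf {t : ℝ | ∃ x' : Fin p → ℝ, H.mulVec x' = μ ∧ A.mulVec x' ≤ b ∧
                t = sqNorm (K.mulVec x' - y)} := by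
  have hatt : ∀ μ : Fin k → ℝ, (∃ x : Fin p → ℝ, H.mulVec x = μ ∧ A.mulVec x ≤ b) →
        ∃ x : Fin p → ℝ, H.mulVec x = μ ∧ A.mulVec x ≤ b ∧
          sqNorm (K.mulVec x - y)
            = sInf {t : ℝ | ∃ x' : Fin p → ℝ, H.mulVec x' = μ ∧ A.mulVec x' ≤ b ∧
                t = sqNorm (K.mulVec x' - y)} := by
    intro μ hne
    obtain ⟨x, hH, hA, hmin⟩ := exists_sqNorm_min K H A b y μ hne
    refine ⟨x, hH, hA, Eq.symm (IsLeast.csInf_eq (And.intro ⟨x, hH, hA, rfl⟩ ?_))⟩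
    rintro t ⟨x', hH', hA', rfl⟩
    exact hmin x' hH' hA'
  refine ⟨Set.ext fun μ => ⟨?_, ?_⟩, hatt⟩
  -- `csInf_le` needs a lower bound for the set; `0` serves, as `sqNorm` is a sum of squares.
  · rintro ⟨x, hH, hA, hc⟩
    refine ⟨⟨x, hH, hA⟩, le_trans (csInf_le (Exists.intro 0 ?_) ⟨x, hH, hA, rfl⟩) hc⟩
    rintro t ⟨x', -, -, rfl⟩
    exact Finset.sum_nonneg fun i _ => sq_nonneg _
  · rintro ⟨hne, hc⟩
    obtain ⟨x, hH, hA, hx⟩ := hatt μ hne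
    exact ⟨x, hH, hA, hx.trans_le hc⟩
end
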